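/- Let 5 ≤ N ≤ 8. Then the extremal solution u* of (P)_λ on the unit ball is regular, i.e. sup_B u* < 1. -/

import Mathlib

open MeasureTheory Metric Set Filter

/-- The Laplacian of `u : ℝ^N → ℝ`, as the sum of pure second partial derivatives. -/
noncomputable def lap {N : ℕ} (u : EuclideanSpace ℝ (Fin N) → ℝ) (x : EuclideanSpace ℝ (Fin N)) : ℝ :=
  ∑ i : Fin N, fderiv ℝ (fun y => fderiv ℝ u y (EuclideanSpace.single i 1)) x
    (EuclideanSpace.single i 1)

/-- The biharmonic operator `Δ²`. -/
noncomputable def biharm {N : ℕ} (u : EuclideanSpace ℝ (Fin N) → ℝ)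
    (x : EuclideanSpace ℝ (Fin N)) : ℝ :=
  lap (lap u) x

/-- A classical solution of `(P)_λ` on the unit ball `B ⊆ ℝ^N`:
`u ∈ C⁴(B̄)`, `0 < u < 1` in `B`, `Δ²u = λ (1-u)⁻²` in `B`, and `u = 0`, `∂_ν u = 0` on `∂B`. -/
structure IsClassicalSolution (N : ℕ) (lam : ℝ) (u : EuclideanSpace ℝ (Fin N) → ℝ) : Prop where
  contDiffOn : ContDiffOn ℝ 4 u (closedBall (0 : EuclideanSpace ℝ (Fin N)) 1)
  pos : ∀ x ∈ ball (0 : EuclideanSpace ℝ (Fin N)) 1, 0 < u x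
  lt_one : ∀ x ∈ ball (0 : EuclideanSpace ℝ (Fin N)) 1, u x < 1
  eqn : ∀ x ∈ ball (0 : EuclideanSpace ℝ (Fin N)) 1, biharm u x = lam / (1 - u x) ^ 2
  bdry : ∀ x : EuclideanSpace ℝ (Fin N), ‖x‖ = 1 → u x = 0
  bdry_deriv : ∀ x : EuclideanSpace ℝ (Fin N), ‖x‖ = 1 →
    fderivWithin ℝ u (closedBall (0 : EuclideanSpace ℝ (Fin N)) 1) x x = 0

/-- The set of voltages `λ > 0` for which `(P)_λ` admits a classical solution;
the pull-in voltage `λ*` is its supremum. -/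
def solSet (N : ℕ) : Set ℝ := {lam | 0 < lam ∧ ∃ u, IsClassicalSolution N lam u}

/-- `λ̄_N = (8/9)(N - 2/3)(N - 8/3)`. -/
noncomputable def lamBar (N : ℕ) : ℝ := (8 / 9) * ((N : ℝ) - 2 / 3) * ((N : ℝ) - 8 / 3)

/-!
By convexity of `(1 - u)⁻²`, the increment `u_λ' - u_λ` between two minimal solutions is a strict
supersolution of the linearised operator `Δ² - V`, where `V = 2 λ / (1 - u_λ) ^ 3`. Since the Green
operator of the clamped plate preserves positivity of radial functions, this alone yields, without
spectral theory, a maximum principle for `Δ² - V` and the stability inequality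
`∫ V ψ² ≤ ∫ (Δψ)²`.

The function `1 - C r ^ (4 / 3)` with `C ^ 3 λ̄_N = λ` solves the equation away from the origin, and
its potential is `2 λ̄_N / r ^ 4`. For `3 ≤ N ≤ 8` this exceeds `H_N / r ^ 4`, where `H_N` is the
optimal Hardy-Rellich constant, so stability forbids `u_λ` to lie above a slightly steeper function
of this kind on a large annulus. Hence `u_λ` touches that function at a radius `S` bounded away
from `0` uniformly in `λ`, and comparison on the ball of radius `S` keeps `u_λ(0)` away from `1`.
-/

/-- A radial function `u` on a ball of `ℝ^(m+1)`, bundled with the quantities that turn the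
radial biharmonic operator into a first-order system: `val = u`, `flux = r^m u'`, `lap = Δu`
and `lapFlux = r^m (Δu)'`, all as functions of the radius. The relations between the four
functions are imposed by `IsRadialSolution`. -/
structure RadialProfile where
  val : ℝ → ℝ
  flux : ℝ → ℝ
  lap : ℝ → ℝ
  lapFlux : ℝ → ℝ

namespace RadialProfile

instance : Add RadialProfile :=
  ⟨fun p q => ⟨p.val + q.val, p.flux + q.flux, p.lap + q.lap, p.lapFlux + q.lapFlux⟩⟩

instance : Sub RadialProfile :=
  ⟨fun p q => ⟨p.val - q.val, p.flux - q.flux, p.lap - q.lap, p.lapFlux - q.lapFlux⟩⟩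

instance : SMul ℝ RadialProfile :=
  ⟨fun c p => ⟨c • p.val, c • p.flux, c • p.lap, c • p.lapFlux⟩⟩

@[simp] theorem val_add (p q : RadialProfile) (r : ℝ) : (p + q).val r = p.val r + q.val r := rfl
@[simp] theorem flux_add (p q : RadialProfile) (r : ℝ) :
    (p + q).flux r = p.flux r + q.flux r := rfl
@[simp] theorem lapFlux_add (p q : RadialProfile) (r : ℝ) :
    (p + q).lapFlux r = p.lapFlux r + q.lapFlux r := rfl
@[simp] theorem val_sub (p q : RadialProfile) (r : ℝ) : (p - q).val r = p.val r - q.val r := rfl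
@[simp] theorem flux_sub (p q : RadialProfile) (r : ℝ) :
    (p - q).flux r = p.flux r - q.flux r := rfl
@[simp] theorem lapFlux_sub (p q : RadialProfile) (r : ℝ) :
    (p - q).lapFlux r = p.lapFlux r - q.lapFlux r := rfl
@[simp] theorem val_smul (c : ℝ) (p : RadialProfile) (r : ℝ) : (c • p).val r = c * p.val r := rfl
@[simp] theorem flux_smul (c : ℝ) (p : RadialProfile) (r : ℝ) :
    (c • p).flux r = c * p.flux r := rfl
@[simp] theorem lapFlux_smul (c : ℝ) (p : RadialProfile) (r : ℝ) :
    (c • p).lapFlux r = c * p.lapFlux r := rfl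

end RadialProfile

/-- `IsRadialSolution m R p f` says that the radial profile `p` solves `Δ²u = f` in the ball of
radius `R` of `ℝ^(m+1)`, away from the centre; vanishing of the two fluxes at `0` makes the
solution regular there. No boundary condition at `R` is imposed. -/
structure IsRadialSolution (m : ℕ) (R : ℝ) (p : RadialProfile) (f : ℝ → ℝ) : Prop where
  hasDerivAt_val : ∀ r ∈ Ioo 0 R, HasDerivAt p.val (p.flux r / r ^ m) r
  hasDerivAt_flux : ∀ r ∈ Ioo 0 R, HasDerivAt p.flux (r ^ m * p.lap r) r
  hasDerivAt_lap : ∀ r ∈ Ioo 0 R, HasDerivAt p.lap (p.lapFlux r / r ^ m) r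
  hasDerivAt_lapFlux : ∀ r ∈ Ioo 0 R, HasDerivAt p.lapFlux (r ^ m * f r) r
  continuousOn_val : ContinuousOn p.val (Icc 0 R)
  continuousOn_flux : ContinuousOn p.flux (Icc 0 R)
  continuousOn_lapFlux : ContinuousOn p.lapFlux (Ico 0 R)
  flux_zero : p.flux 0 = 0
  lapFlux_zero : p.lapFlux 0 = 0

namespace IsRadialSolution

variable {m : ℕ} {R : ℝ} {p q : RadialProfile} {f g : ℝ → ℝ}

theorem add (hp : IsRadialSolution m R p f) (hq : IsRadialSolution m R q g) :
    IsRadialSolution m R (p + q) (f + g) where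
  hasDerivAt_val r hr := ((hp.hasDerivAt_val r hr).add (hq.hasDerivAt_val r hr)).congr_deriv <| by
    rw [RadialProfile.flux_add, add_div]
  hasDerivAt_flux r hr :=
    ((hp.hasDerivAt_flux r hr).add (hq.hasDerivAt_flux r hr)).congr_deriv (mul_add _ _ _).symm
  hasDerivAt_lap r hr := ((hp.hasDerivAt_lap r hr).add (hq.hasDerivAt_lap r hr)).congr_deriv <| by
    rw [RadialProfile.lapFlux_add, add_div]
  hasDerivAt_lapFlux r hr :=
    ((hp.hasDerivAt_lapFlux r hr).add (hq.hasDerivAt_lapFlux r hr)).congr_deriv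
      (mul_add _ _ _).symm
  continuousOn_val := hp.continuousOn_val.add hq.continuousOn_val
  continuousOn_flux := hp.continuousOn_flux.add hq.continuousOn_flux
  continuousOn_lapFlux := hp.continuousOn_lapFlux.add hq.continuousOn_lapFlux
  flux_zero := by simp [hp.flux_zero, hq.flux_zero]
  lapFlux_zero := by simp [hp.lapFlux_zero, hq.lapFlux_zero]

theorem sub (hp : IsRadialSolution m R p f) (hq : IsRadialSolution m R q g) :
    IsRadialSolution m R (p - q) (f - g) where
  hasDerivAt_val r hr := ((hp.hasDerivAt_val r hr).sub (hq.hasDerivAt_val r hr)).congr_deriv <| by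
    rw [RadialProfile.flux_sub, sub_div]
  hasDerivAt_flux r hr :=
    ((hp.hasDerivAt_flux r hr).sub (hq.hasDerivAt_flux r hr)).congr_deriv (mul_sub _ _ _).symm
  hasDerivAt_lap r hr := ((hp.hasDerivAt_lap r hr).sub (hq.hasDerivAt_lap r hr)).congr_deriv <| by
    rw [RadialProfile.lapFlux_sub, sub_div]
  hasDerivAt_lapFlux r hr :=
    ((hp.hasDerivAt_lapFlux r hr).sub (hq.hasDerivAt_lapFlux r hr)).congr_deriv
      (mul_sub _ _ _).symm
  continuousOn_val := hp.continuousOn_val.sub hq.continuousOn_val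
  continuousOn_flux := hp.continuousOn_flux.sub hq.continuousOn_flux
  continuousOn_lapFlux := hp.continuousOn_lapFlux.sub hq.continuousOn_lapFlux
  flux_zero := by simp [hp.flux_zero, hq.flux_zero]
  lapFlux_zero := by simp [hp.lapFlux_zero, hq.lapFlux_zero]

theorem smul (c : ℝ) (hp : IsRadialSolution m R p f) :
    IsRadialSolution m R (c • p) (c • f) where
  hasDerivAt_val r hr := ((hp.hasDerivAt_val r hr).const_smul c).congr_deriv <| by
    rw [RadialProfile.flux_smul, mul_div_assoc, smul_eq_mul]
  hasDerivAt_flux r hr := ((hp.hasDerivAt_flux r hr).const_smul c).congr_deriv <|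
    mul_left_comm _ _ _
  hasDerivAt_lap r hr := ((hp.hasDerivAt_lap r hr).const_smul c).congr_deriv <| by
    rw [RadialProfile.lapFlux_smul, mul_div_assoc, smul_eq_mul]
  hasDerivAt_lapFlux r hr := ((hp.hasDerivAt_lapFlux r hr).const_smul c).congr_deriv <|
    mul_left_comm _ _ _
  continuousOn_val := hp.continuousOn_val.const_smul c
  continuousOn_flux := hp.continuousOn_flux.const_smul c
  continuousOn_lapFlux := hp.continuousOn_lapFlux.const_smul c
  flux_zero := by simp [hp.flux_zero]
  lapFlux_zero := by simp [hp.lapFlux_zero]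

theorem congr (hp : IsRadialSolution m R p f) (hfg : ∀ r ∈ Ioo 0 R, f r = g r) :
    IsRadialSolution m R p g :=
  { hp with hasDerivAt_lapFlux := fun r hr => hfg r hr ▸ hp.hasDerivAt_lapFlux r hr }

theorem restrict (hp : IsRadialSolution m R p f) {S : ℝ} (hS : S ≤ R) :
    IsRadialSolution m S p f where
  hasDerivAt_val r hr := hp.hasDerivAt_val r ⟨hr.1, hr.2.trans_le hS⟩
  hasDerivAt_flux r hr := hp.hasDerivAt_flux r ⟨hr.1, hr.2.trans_le hS⟩
  hasDerivAt_lap r hr := hp.hasDerivAt_lap r ⟨hr.1, hr.2.trans_le hS⟩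
  hasDerivAt_lapFlux r hr := hp.hasDerivAt_lapFlux r ⟨hr.1, hr.2.trans_le hS⟩
  continuousOn_val := hp.continuousOn_val.mono (Icc_subset_Icc_right hS)
  continuousOn_flux := hp.continuousOn_flux.mono (Icc_subset_Icc_right hS)
  continuousOn_lapFlux := hp.continuousOn_lapFlux.mono (Ico_subset_Ico_right hS)
  flux_zero := hp.flux_zero
  lapFlux_zero := hp.lapFlux_zero

/-! ### The maximum principle -/

theorem lapFlux_pos (hp : IsRadialSolution m R p f) (hf : ∀ r ∈ Ioo 0 R, 0 < f r) :
    ∀ r ∈ Ioo 0 R, 0 < p.lapFlux r := by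
  have hmono : StrictMonoOn p.lapFlux (Ico 0 R) := by
    refine strictMonoOn_of_deriv_pos (convex_Ico 0 R) hp.continuousOn_lapFlux fun r hr => ?_
    rw [interior_Ico] at hr
    rw [(hp.hasDerivAt_lapFlux r hr).deriv]
    exact mul_pos (pow_pos hr.1 _) (hf r hr)
  intro r hr
  simpa only [hp.lapFlux_zero] using
    hmono ⟨le_rfl, hr.1.trans hr.2⟩ (Ioo_subset_Ico_self hr) hr.1

theorem strictMonoOn_lap (hp : IsRadialSolution m R p f) (hf : ∀ r ∈ Ioo 0 R, 0 < f r) :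
    StrictMonoOn p.lap (Ioo 0 R) := by
  refine strictMonoOn_of_deriv_pos (convex_Ioo 0 R)
    (fun r hr => (hp.hasDerivAt_lap r hr).continuousAt.continuousWithinAt) fun r hr => ?_
  rw [interior_Ioo] at hr
  rw [(hp.hasDerivAt_lap r hr).deriv]
  exact div_pos (hp.lapFlux_pos hf r hr) (pow_pos hr.1 _)

theorem exists_flux_eq (hp : IsRadialSolution m R p f) {r : ℝ} (hr : r ∈ Ioo 0 R) :
    ∃ s ∈ Ioo 0 r, p.flux r = r * (s ^ m * p.lap s) := by
  obtain ⟨s, hs, hslope⟩ := exists_hasDerivAt_eq_slope p.flux (fun s => s ^ m * p.lap s) hr.1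
    (hp.continuousOn_flux.mono (Icc_subset_Icc_right hr.2.le))
    fun s hs => hp.hasDerivAt_flux s ⟨hs.1, hs.2.trans hr.2⟩
  refine ⟨s, hs, ?_⟩
  rw [hslope, hp.flux_zero, sub_zero, sub_zero, mul_div_cancel₀ _ hr.1.ne']

/- If the flux were nonnegative at `r`, then `Δu` would be nonnegative somewhere before `r`, hence
positive after `r`, and the flux would keep growing up to `R`. -/
theorem flux_neg (hp : IsRadialSolution m R p f) (hf : ∀ r ∈ Ioo 0 R, 0 < f r)
    (hR : p.flux R ≤ 0) : ∀ r ∈ Ioo 0 R, p.flux r < 0 := by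
  intro r hr
  by_contra! hflux
  obtain ⟨s, hs, hflux_eq⟩ := hp.exists_flux_eq hr
  have hlap : 0 ≤ p.lap s := by
    rw [hflux_eq] at hflux
    exact nonneg_of_mul_nonneg_right (nonneg_of_mul_nonneg_right hflux hr.1) (pow_pos hs.1 m)
  have hmono : StrictMonoOn p.flux (Icc r R) := by
    refine strictMonoOn_of_deriv_pos (convex_Icc r R)
      (hp.continuousOn_flux.mono (Icc_subset_Icc_left hr.1.le)) fun x hx => ?_
    rw [interior_Icc] at hx
    have hx' : x ∈ Ioo 0 R := ⟨hr.1.trans hx.1, hx.2⟩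
    rw [(hp.hasDerivAt_flux x hx').deriv]
    exact mul_pos (pow_pos hx'.1 _) <| hlap.trans_lt <|
      hp.strictMonoOn_lap hf ⟨hs.1, hs.2.trans hr.2⟩ hx' (hs.2.trans hx.1)
  have := hmono (left_mem_Icc.2 hr.2.le) (right_mem_Icc.2 hr.2.le) hr.2
  linarith

theorem strictAntiOn_val (hp : IsRadialSolution m R p f) (hf : ∀ r ∈ Ioo 0 R, 0 < f r)
    (hR : p.flux R ≤ 0) : StrictAntiOn p.val (Icc 0 R) := by
  refine strictAntiOn_of_deriv_neg (convex_Icc 0 R) hp.continuousOn_val fun r hr => ?_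
  rw [interior_Icc] at hr
  rw [(hp.hasDerivAt_val r hr).deriv]
  exact div_neg_of_neg_of_pos (hp.flux_neg hf hR r hr) (pow_pos hr.1 _)

theorem val_pos (hp : IsRadialSolution m R p f) (hf : ∀ r ∈ Ioo 0 R, 0 < f r)
    (hflux : p.flux R ≤ 0) (hval : 0 ≤ p.val R) : ∀ r ∈ Ico 0 R, 0 < p.val r := fun _ hr =>
  hval.trans_lt <| hp.strictAntiOn_val hf hflux (Ico_subset_Icc_self hr)
    (right_mem_Icc.2 (hr.1.trans hr.2.le)) hr.2

end IsRadialSolution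

/-- `IsClampedSolution m R p f` says that `p` solves the Dirichlet problem `Δ²u = f`,
`u = ∂_ν u = 0` on the sphere of radius `R`, and is regular up to that sphere. -/
structure IsClampedSolution (m : ℕ) (R : ℝ) (p : RadialProfile) (f : ℝ → ℝ) : Prop
    extends IsRadialSolution m R p f where
  continuousOn_lap : ContinuousOn p.lap (Icc 0 R)
  continuousOn_lapFlux' : ContinuousOn p.lapFlux (Icc 0 R)
  val_right : p.val R = 0
  flux_right : p.flux R = 0

/-- The profile of `(R² - ‖x‖²)²`, the deflection of a clamped plate under a constant load. -/
def plateProfile (m : ℕ) (R : ℝ) : RadialProfile where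
  val r := (R ^ 2 - r ^ 2) ^ 2
  flux r := -4 * r ^ (m + 1) * (R ^ 2 - r ^ 2)
  lap r := 8 * r ^ 2 - 4 * (m + 1) * (R ^ 2 - r ^ 2)
  lapFlux r := 8 * (m + 3) * r ^ (m + 1)

theorem isClampedSolution_plateProfile (m : ℕ) (R : ℝ) :
    IsClampedSolution m R (plateProfile m R) fun _ => 8 * (m + 1) * (m + 3) where
  hasDerivAt_val r hr := by
    refine ((((hasDerivAt_id r).pow 2).const_sub (R ^ 2)).pow 2).congr_deriv ?_
    have : r ≠ 0 := hr.1.ne'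
    simp only [plateProfile, Pi.pow_apply, id]
    field_simp
    push_cast
    ring
  hasDerivAt_flux r _ := by
    refine ((((hasDerivAt_id r).pow (m + 1)).const_mul (-4)).mul
      (((hasDerivAt_id r).pow 2).const_sub (R ^ 2))).congr_deriv ?_
    simp only [plateProfile, id, Pi.pow_apply, add_tsub_cancel_right]
    push_cast
    ring
  hasDerivAt_lap r hr := by
    refine (((((hasDerivAt_id r).pow 2).const_mul 8)).sub
      ((((hasDerivAt_id r).pow 2).const_sub (R ^ 2)).const_mul (4 * (m + 1 : ℝ)))).congr_deriv ?_
    have : r ≠ 0 := hr.1.ne'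
    simp only [plateProfile, id]
    field_simp
    push_cast
    ring
  hasDerivAt_lapFlux r _ := by
    refine (((hasDerivAt_id r).pow (m + 1)).const_mul (8 * (m + 3 : ℝ))).congr_deriv ?_
    simp only [id, add_tsub_cancel_right]
    push_cast
    ring
  continuousOn_val := by simp only [plateProfile]; fun_prop
  continuousOn_flux := by simp only [plateProfile]; fun_prop
  continuousOn_lapFlux := by simp only [plateProfile]; fun_prop
  flux_zero := by simp [plateProfile]
  lapFlux_zero := by simp [plateProfile]
  continuousOn_lap := by simp only [plateProfile]; fun_prop
  continuousOn_lapFlux' := by simp only [plateProfile]; fun_prop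
  val_right := by simp [plateProfile]
  flux_right := by simp [plateProfile]

/- Adding a multiple of the plate profile makes the source positive and would produce a zero in
the interior if `p` were negative somewhere. -/
theorem IsRadialSolution.val_nonneg {m : ℕ} {R : ℝ} {p : RadialProfile} {f : ℝ → ℝ}
    (hp : IsRadialSolution m R p f) (hf : ∀ r ∈ Ioo 0 R, 0 ≤ f r) (hflux : p.flux R ≤ 0)
    (hval : 0 ≤ p.val R) : ∀ r ∈ Icc 0 R, 0 ≤ p.val r := by
  intro r hr
  by_contra! hneg
  have hrR : r < R := hr.2.lt_of_ne fun h => hneg.not_ge (h ▸ hval)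
  have hplate : 0 < (plateProfile m R).val r :=
    pow_pos (sub_pos.2 (pow_lt_pow_left₀ hrR hr.1 two_ne_zero)) 2
  set ε := -p.val r / (plateProfile m R).val r with hε_def
  have hε : 0 < ε := div_pos (neg_pos.2 hneg) hplate
  have hclamped := isClampedSolution_plateProfile m R
  have hpos := (hp.add (hclamped.smul ε)).val_pos
    (fun s hs => add_pos_of_nonneg_of_pos (hf s hs) (mul_pos hε (by positivity)))
    (by simpa [hclamped.flux_right] using hflux) (by simpa [hclamped.val_right] using hval)
    r ⟨hr.1, hrR⟩
  rw [RadialProfile.val_add, RadialProfile.val_smul, hε_def, div_mul_cancel₀ _ hplate.ne',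
    add_neg_cancel] at hpos
  exact hpos.false

namespace IsClampedSolution

variable {m : ℕ} {R : ℝ} {p q : RadialProfile} {f g : ℝ → ℝ}

theorem sub (hp : IsClampedSolution m R p f) (hq : IsClampedSolution m R q g) :
    IsClampedSolution m R (p - q) (f - g) where
  toIsRadialSolution := hp.toIsRadialSolution.sub hq.toIsRadialSolution
  continuousOn_lap := hp.continuousOn_lap.sub hq.continuousOn_lap
  continuousOn_lapFlux' := hp.continuousOn_lapFlux'.sub hq.continuousOn_lapFlux'
  val_right := by simp [hp.val_right, hq.val_right]
  flux_right := by simp [hp.flux_right, hq.flux_right]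

theorem congr (hp : IsClampedSolution m R p f) (hfg : ∀ r ∈ Ioo 0 R, f r = g r) :
    IsClampedSolution m R p g :=
  { hp with toIsRadialSolution := hp.toIsRadialSolution.congr hfg }

theorem val_nonneg (hp : IsClampedSolution m R p f) (hf : ∀ r ∈ Ioo 0 R, 0 ≤ f r) :
    ∀ r ∈ Icc 0 R, 0 ≤ p.val r :=
  hp.toIsRadialSolution.val_nonneg hf hp.flux_right.le hp.val_right.ge

theorem green (hR : 0 < R) (hp : IsClampedSolution m R p f) (hq : IsClampedSolution m R q g)
    (hf : ContinuousOn f (Icc 0 R)) :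
    ∫ r in 0..R, r ^ m * (f r * q.val r) = ∫ r in 0..R, r ^ m * (p.lap r * q.lap r) := by
  have hint_left : IntervalIntegrable (fun r => r ^ m * (f r * q.val r)) volume 0 R :=
    ((continuousOn_pow m).mul (hf.mul hq.continuousOn_val)).intervalIntegrable_of_Icc hR.le
  have hint_right : IntervalIntegrable (fun r => r ^ m * (p.lap r * q.lap r)) volume 0 R :=
    ((continuousOn_pow m).mul
      (hp.continuousOn_lap.mul hq.continuousOn_lap)).intervalIntegrable_of_Icc hR.le
  have hftc := intervalIntegral.integral_eq_sub_of_hasDerivAt_of_le hR.le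
    (f := fun r => p.lapFlux r * q.val r - p.lap r * q.flux r)
    (f' := fun r => r ^ m * (f r * q.val r) - r ^ m * (p.lap r * q.lap r))
    ((hp.continuousOn_lapFlux'.mul hq.continuousOn_val).sub
      (hp.continuousOn_lap.mul hq.continuousOn_flux))
    (fun r hr => by
      refine (((hp.hasDerivAt_lapFlux r hr).mul (hq.hasDerivAt_val r hr)).sub
        ((hp.hasDerivAt_lap r hr).mul (hq.hasDerivAt_flux r hr))).congr_deriv ?_
      ring)
    (hint_left.sub hint_right)
  rw [intervalIntegral.integral_sub hint_left hint_right] at hftc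
  simpa [hq.val_right, hq.flux_right, hp.lapFlux_zero, hq.flux_zero, sub_eq_zero] using hftc

theorem symm (hR : 0 < R) (hp : IsClampedSolution m R p f) (hq : IsClampedSolution m R q g)
    (hf : ContinuousOn f (Icc 0 R)) (hg : ContinuousOn g (Icc 0 R)) :
    ∫ r in 0..R, r ^ m * (f r * q.val r) = ∫ r in 0..R, r ^ m * (g r * p.val r) := by
  rw [hp.green hR hq hf, hq.green hR hp hg]
  simp only [mul_comm (p.lap _)]

end IsClampedSolution

/-! ### Solving the clamped problem -/

/-- The weighted mean `∫₀¹ t^m G(t² s) dt`. In the variable `s = ‖x‖²` it inverts the divergence: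
if `Δ (F (‖x‖²)) = G (‖x‖²)` on `ℝ^(m+1)`, then `F' = radialMean m G / 2`. -/
noncomputable def radialMean (m : ℕ) (G : ℝ → ℝ) (s : ℝ) : ℝ :=
  ∫ t in 0..1, t ^ m * G (t ^ 2 * s)

theorem continuous_radialMean (m : ℕ) {G : ℝ → ℝ} (hG : Continuous G) :
    Continuous (radialMean m G) :=
  intervalIntegral.continuous_parametric_intervalIntegral_of_continuous' (by fun_prop) 0 1

theorem radialMean_add_const (m : ℕ) {G : ℝ → ℝ} (hG : Continuous G) (c s : ℝ) :
    radialMean m (fun σ => G σ + c) s = radialMean m G s + c / (m + 1) := by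
  have hpow : ∫ t in (0 : ℝ)..1, t ^ m * c = c / (m + 1) := by
    rw [intervalIntegral.integral_mul_const, integral_pow]
    simp [div_eq_inv_mul]
  simp only [radialMean, mul_add]
  rw [intervalIntegral.integral_add (Continuous.intervalIntegrable (by fun_prop) _ _)
    (Continuous.intervalIntegrable (by fun_prop) _ _), hpow]

theorem hasDerivAt_radialMean (m : ℕ) {G : ℝ → ℝ} (hG : ContDiff ℝ 1 G) (s : ℝ) :
    HasDerivAt (radialMean m G) (radialMean (m + 2) (deriv G) s) s := by
  have : Continuous (deriv G) := hG.continuous_deriv le_rfl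
  have hcont (x : ℝ) : Continuous fun t : ℝ => t ^ m * G (t ^ 2 * x) := by
    have := hG.continuous
    fun_prop
  obtain ⟨C, hC⟩ := ((isCompact_Icc (a := (0 : ℝ)) (b := 1)).prod
    (isCompact_closedBall s 1)).exists_bound_of_continuousOn
    (f := fun z : ℝ × ℝ => z.1 ^ (m + 2) * deriv G (z.1 ^ 2 * z.2)) (by fun_prop)
  refine (intervalIntegral.hasDerivAt_integral_of_dominated_loc_of_deriv_le
    (F' := fun x t => t ^ (m + 2) * deriv G (t ^ 2 * x)) (bound := fun _ => C)
    (closedBall_mem_nhds s one_pos) (.of_forall fun x => (hcont x).aestronglyMeasurable)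
    ((hcont s).intervalIntegrable _ _) (by fun_prop) (.of_forall fun t ht x hx => ?_)
    intervalIntegrable_const (.of_forall fun t _ x _ => ?_)).2
  · rw [uIoc_of_le zero_le_one] at ht
    exact hC (t, x) ⟨Ioc_subset_Icc_self ht, hx⟩
  · refine ((((hG.differentiable one_ne_zero) (t ^ 2 * x)).hasDerivAt.comp x
      ((hasDerivAt_id x).const_mul (t ^ 2))).const_mul (t ^ m)).congr_deriv ?_
    ring

theorem contDiff_radialMean (n m : ℕ) {G : ℝ → ℝ} (hG : ContDiff ℝ n G) :
    ContDiff ℝ n (radialMean m G) := by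
  induction n generalizing m G with
  | zero => exact contDiff_zero.2 (continuous_radialMean m hG.continuous)
  | succ n ih =>
    have hG1 : ContDiff ℝ 1 G := hG.of_le (by simp)
    have hderiv := hasDerivAt_radialMean m hG1
    rw [Nat.cast_succ] at hG ⊢
    refine contDiff_succ_iff_deriv.2
      ⟨fun s => (hderiv s).differentiableAt, by simp, ?_⟩
    rw [funext fun s => (hderiv s).deriv]
    exact ih (m + 2) (contDiff_succ_iff_deriv.1 hG).2.2

/- Integrate the derivative of `t^(m+1) G(t² s)` over `[0, 1]`. -/
theorem radialMean_eq (m : ℕ) {G : ℝ → ℝ} (hG : ContDiff ℝ 1 G) (s : ℝ) :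
    (m + 1) * radialMean m G s + 2 * s * radialMean (m + 2) (deriv G) s = G s := by
  have hG0 := hG.continuous
  have : Continuous (deriv G) := hG.continuous_deriv le_rfl
  have hftc := intervalIntegral.integral_eq_sub_of_hasDerivAt (a := 0) (b := 1)
    (f := fun t => t ^ (m + 1) * G (t ^ 2 * s))
    (f' := fun t => (m + 1) * (t ^ m * G (t ^ 2 * s))
      + 2 * s * (t ^ (m + 2) * deriv G (t ^ 2 * s)))
    (fun t _ => by
      refine ((hasDerivAt_pow (m + 1) t).mul
        (((hG.differentiable one_ne_zero) (t ^ 2 * s)).hasDerivAt.comp t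
          ((hasDerivAt_pow 2 t).mul_const s))).congr_deriv ?_
      simp only [add_tsub_cancel_right, Function.comp_apply]
      push_cast
      ring)
    (Continuous.intervalIntegrable (by fun_prop) _ _)
  rw [intervalIntegral.integral_add (Continuous.intervalIntegrable (by fun_prop) _ _)
    (Continuous.intervalIntegrable (by fun_prop) _ _), intervalIntegral.integral_const_mul,
    intervalIntegral.integral_const_mul] at hftc
  simpa [radialMean] using hftc

theorem pow_mul_radialMean_sq (m : ℕ) (G : ℝ → ℝ) (r : ℝ) :
    r ^ (m + 1) * radialMean m G (r ^ 2) = ∫ ρ in 0..r, ρ ^ m * G (ρ ^ 2) := by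
  have hsub := intervalIntegral.mul_integral_comp_mul_right (a := 0) (b := 1) r
    (f := fun ρ => ρ ^ m * G (ρ ^ 2))
  simp only [zero_mul, one_mul] at hsub
  rw [← hsub, pow_succ', mul_assoc, radialMean, ← intervalIntegral.integral_const_mul]
  simp only [mul_pow]
  congr! 3
  ring

theorem hasDerivAt_pow_mul_radialMean_sq (m : ℕ) {G : ℝ → ℝ} (hG : Continuous G) (r : ℝ) :
    HasDerivAt (fun r => r ^ (m + 1) * radialMean m G (r ^ 2)) (r ^ m * G (r ^ 2)) r := by
  simp only [pow_mul_radialMean_sq]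
  exact (Continuous.integral_hasStrictDerivAt (by fun_prop) 0 r).hasDerivAt

/-- The primitive of `radialMean m G / 2` vanishing at `0`: `invLap m G (‖x‖²)` is the radial
function on `ℝ^(m+1)` with Laplacian `G (‖x‖²)` that vanishes at the origin. -/
noncomputable def invLap (m : ℕ) (G : ℝ → ℝ) (s : ℝ) : ℝ :=
  (∫ σ in 0..s, radialMean m G σ) / 2

theorem hasDerivAt_invLap (m : ℕ) {G : ℝ → ℝ} (hG : Continuous G) (s : ℝ) :
    HasDerivAt (invLap m G) (radialMean m G s / 2) s :=
  ((continuous_radialMean m hG).integral_hasStrictDerivAt 0 s).hasDerivAt.div_const 2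

theorem contDiff_invLap (n m : ℕ) {G : ℝ → ℝ} (hG : ContDiff ℝ n G) :
    ContDiff ℝ (n + 1) (invLap m G) := by
  have hderiv := hasDerivAt_invLap m hG.continuous
  refine contDiff_succ_iff_deriv.2 ⟨fun s => (hderiv s).differentiableAt, by simp, ?_⟩
  rw [funext fun s => (hderiv s).deriv]
  exact (contDiff_radialMean n m hG).div_const 2

theorem hasDerivAt_invLap_sq (m : ℕ) {G : ℝ → ℝ} (hG : Continuous G) {r : ℝ} (hr : r ≠ 0) :
    HasDerivAt (fun r => invLap m G (r ^ 2)) (r ^ (m + 1) * radialMean m G (r ^ 2) / r ^ m) r := by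
  refine ((hasDerivAt_invLap m hG (r ^ 2)).comp r (hasDerivAt_pow 2 r)).congr_deriv ?_
  field_simp
  push_cast
  ring

/-- The Laplacian, as a function of `s = ‖x‖²`, of the solution of `Δ²u = G (‖x‖²)` clamped on the
sphere of radius `R`: the additive constant makes the flux of `u` vanish there. -/
noncomputable def clampedLap (m : ℕ) (R : ℝ) (G : ℝ → ℝ) (s : ℝ) : ℝ :=
  invLap m G s - (m + 1) * radialMean m (invLap m G) (R ^ 2)

/-- The solution of `Δ²u = G (‖x‖²)` clamped on the sphere of radius `R`, as a function of
`s = ‖x‖²`. -/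
noncomputable def clampedVal (m : ℕ) (R : ℝ) (G : ℝ → ℝ) (s : ℝ) : ℝ :=
  invLap m (clampedLap m R G) s - invLap m (clampedLap m R G) (R ^ 2)

/-- The radial profile of the solution of `Δ²u = G (‖x‖²)` clamped on the sphere of radius `R`. -/
noncomputable def clampedProfile (m : ℕ) (R : ℝ) (G : ℝ → ℝ) : RadialProfile where
  val r := clampedVal m R G (r ^ 2)
  flux r := r ^ (m + 1) * radialMean m (clampedLap m R G) (r ^ 2)
  lap r := clampedLap m R G (r ^ 2)
  lapFlux r := r ^ (m + 1) * radialMean m G (r ^ 2)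

theorem contDiff_clampedLap (n m : ℕ) (R : ℝ) {G : ℝ → ℝ} (hG : ContDiff ℝ n G) :
    ContDiff ℝ (n + 1) (clampedLap m R G) :=
  (contDiff_invLap n m hG).sub contDiff_const

theorem contDiff_clampedVal (n m : ℕ) (R : ℝ) {G : ℝ → ℝ} (hG : ContDiff ℝ n G) :
    ContDiff ℝ (n + 2) (clampedVal m R G) := by
  have := contDiff_invLap (n + 1) m (contDiff_clampedLap n m R hG)
  exact (by simpa [add_assoc, one_add_one_eq_two] using this : ContDiff ℝ (n + 2) _).sub
    contDiff_const

theorem radialMean_clampedLap_right (m : ℕ) (R : ℝ) {G : ℝ → ℝ} (hG : Continuous G) :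
    radialMean m (clampedLap m R G) (R ^ 2) = 0 := by
  have hcont := (contDiff_invLap 0 m (contDiff_zero.2 hG)).continuous
  have := radialMean_add_const m hcont (-((m + 1) * radialMean m (invLap m G) (R ^ 2))) (R ^ 2)
  simp only [← sub_eq_add_neg] at this
  unfold clampedLap
  rw [this]
  field_simp
  ring

theorem isClampedSolution_clampedProfile (m : ℕ) (R : ℝ) {G : ℝ → ℝ} (hG : Continuous G) :
    IsClampedSolution m R (clampedProfile m R G) fun r => G (r ^ 2) := by
  have hL : Continuous (clampedLap m R G) :=
    (contDiff_clampedLap 0 m R (contDiff_zero.2 hG)).continuous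
  have hV : Continuous (clampedVal m R G) :=
    (contDiff_clampedVal 0 m R (contDiff_zero.2 hG)).continuous
  have hAL := continuous_radialMean m hL
  have hAG := continuous_radialMean m hG
  exact
    { hasDerivAt_val := fun r hr => (hasDerivAt_invLap_sq m hL hr.1.ne').sub_const _
      hasDerivAt_flux := fun r _ => hasDerivAt_pow_mul_radialMean_sq m hL r
      hasDerivAt_lap := fun r hr => (hasDerivAt_invLap_sq m hG hr.1.ne').sub_const _
      hasDerivAt_lapFlux := fun r _ => hasDerivAt_pow_mul_radialMean_sq m hG r
      continuousOn_val := by simp only [clampedProfile]; fun_prop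
      continuousOn_flux := by simp only [clampedProfile]; fun_prop
      continuousOn_lapFlux := by simp only [clampedProfile]; fun_prop
      flux_zero := by simp [clampedProfile]
      lapFlux_zero := by simp [clampedProfile]
      continuousOn_lap := by simp only [clampedProfile]; fun_prop
      continuousOn_lapFlux' := by simp only [clampedProfile]; fun_prop
      val_right := sub_self _
      flux_right := by simp [clampedProfile, radialMean_clampedLap_right m R hG] }

theorem exists_continuous_comp_sq_eqOn {R : ℝ} (hR : 0 ≤ R) {f : ℝ → ℝ}
    (hf : ContinuousOn f (Icc 0 R)) : ∃ G, Continuous G ∧ EqOn (fun r => G (r ^ 2)) f (Icc 0 R) :=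
  ⟨fun s => IccExtend hR ((Icc 0 R).domRestrict f) √s,
    hf.domRestrict.Icc_extend'.comp Real.continuous_sqrt, fun r hr => by
      simp [Real.sqrt_sq hr.1, IccExtend_of_mem _ _ hr]⟩

theorem exists_isClampedSolution (m : ℕ) {R : ℝ} (hR : 0 ≤ R) {f : ℝ → ℝ}
    (hf : ContinuousOn f (Icc 0 R)) : ∃ p, IsClampedSolution m R p f := by
  obtain ⟨G, hG, hGf⟩ := exists_continuous_comp_sq_eqOn hR hf
  exact ⟨_, (isClampedSolution_clampedProfile m R hG).congr
    fun r hr => hGf (Ioo_subset_Icc_self hr)⟩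

/-! ### The Laplacian on Euclidean space -/

section Laplacian

variable {N : ℕ}

theorem lap_congr_of_eventuallyEq {u v : EuclideanSpace ℝ (Fin N) → ℝ}
    {x : EuclideanSpace ℝ (Fin N)} (h : u =ᶠ[nhds x] v) : lap u x = lap v x := by
  refine Finset.sum_congr rfl fun i _ => ?_
  have : (fun y => fderiv ℝ u y (EuclideanSpace.single i 1)) =ᶠ[nhds x]
      fun y => fderiv ℝ v y (EuclideanSpace.single i 1) := by
    filter_upwards [h.fderiv (𝕜 := ℝ)] with y hy using by rw [hy]
  rw [this.fderiv_eq]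

theorem lap_eq_laplacian {u : EuclideanSpace ℝ (Fin N) → ℝ} {x : EuclideanSpace ℝ (Fin N)}
    (h : ContDiffAt ℝ 2 u x) : lap u x = Laplacian.laplacian u x := by
  rw [InnerProductSpace.laplacian_eq_iteratedFDeriv_orthonormalBasis u
    (EuclideanSpace.basisFun (Fin N) ℝ)]
  refine Finset.sum_congr rfl fun i _ => ?_
  have hfderiv : DifferentiableAt ℝ (fderiv ℝ u) x :=
    (h.fderiv_right (m := 1) (by norm_num)).differentiableAt one_ne_zero
  rw [iteratedFDeriv_two_apply, fderiv_clm_apply hfderiv (differentiableAt_const _)]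
  simp

theorem contDiffAt_lap {u : EuclideanSpace ℝ (Fin N) → ℝ} {x : EuclideanSpace ℝ (Fin N)} {n : ℕ}
    (h : ContDiffAt ℝ (n + 2 : ℕ) u x) : ContDiffAt ℝ n (lap u) x := by
  refine ContDiffAt.sum fun i _ => ?_
  have hfderiv : ContDiffAt ℝ (n + 1 : ℕ) (fderiv ℝ u) x := h.fderiv_right (by norm_cast)
  exact ((hfderiv.clm_apply contDiffAt_const).fderiv_right (by norm_cast)).clm_apply
    contDiffAt_const

theorem lap_comp_linearIsometryEquiv {u : EuclideanSpace ℝ (Fin N) → ℝ}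
    {x : EuclideanSpace ℝ (Fin N)} (g : EuclideanSpace ℝ (Fin N) ≃ₗᵢ[ℝ] EuclideanSpace ℝ (Fin N))
    (h : ContDiffAt ℝ 2 u (g x)) : lap (u ∘ g) x = lap u (g x) := by
  have hcomp : iteratedFDeriv ℝ 2 (u ∘ g) x = (iteratedFDeriv ℝ 2 u (g x)).compContinuousLinearMap
      fun _ => (g.toContinuousLinearEquiv : EuclideanSpace ℝ (Fin N) →L[ℝ] _) := by
    simpa only [preimage_univ, iteratedFDerivWithin_univ, g.coe_toContinuousLinearEquiv] using
      g.toContinuousLinearEquiv.iteratedFDerivWithin_comp_right u uniqueDiffOn_univ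
        (mem_univ (g x)) 2
  rw [lap_eq_laplacian h, lap_eq_laplacian (h.comp x g.contDiff.contDiffAt),
    InnerProductSpace.laplacian_eq_iteratedFDeriv_orthonormalBasis _
      (EuclideanSpace.basisFun (Fin N) ℝ),
    InnerProductSpace.laplacian_eq_iteratedFDeriv_orthonormalBasis _
      ((EuclideanSpace.basisFun (Fin N) ℝ).map g)]
  refine Finset.sum_congr rfl fun i _ => ?_
  rw [hcomp, ContinuousMultilinearMap.compContinuousLinearMap_apply]
  congr 1
  ext j
  fin_cases j <;> rfl

theorem lap_comp_norm_sq {F F₁ : ℝ → ℝ} {F₂ : ℝ} {x : EuclideanSpace ℝ (Fin N)}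
    (h₁ : ∀ᶠ s in nhds (‖x‖ ^ 2), HasDerivAt F (F₁ s) s) (h₂ : HasDerivAt F₁ F₂ (‖x‖ ^ 2)) :
    lap (fun y => F (‖y‖ ^ 2)) x = 4 * ‖x‖ ^ 2 * F₂ + 2 * N * F₁ (‖x‖ ^ 2) := by
  have hnorm (y : EuclideanSpace ℝ (Fin N)) :
      HasFDerivAt (fun y : EuclideanSpace ℝ (Fin N) => ‖y‖ ^ 2) (2 • innerSL ℝ y) y :=
    (hasStrictFDerivAt_norm_sq y).hasFDerivAt
  have hsecond (i : Fin N) :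
      fderiv ℝ (fun y => fderiv ℝ (fun y : EuclideanSpace ℝ (Fin N) => F (‖y‖ ^ 2)) y
        (EuclideanSpace.single i 1)) x (EuclideanSpace.single i 1)
      = 4 * x i ^ 2 * F₂ + 2 * F₁ (‖x‖ ^ 2) := by
    have hfirst : (fun y => fderiv ℝ (fun y : EuclideanSpace ℝ (Fin N) => F (‖y‖ ^ 2)) y
        (EuclideanSpace.single i 1)) =ᶠ[nhds x] fun y => F₁ (‖y‖ ^ 2) * (2 * y i) := by
      filter_upwards [(hnorm x).continuousAt.eventually h₁] with y hy
      have hcomp : HasFDerivAt (fun y : EuclideanSpace ℝ (Fin N) => F (‖y‖ ^ 2)) _ y :=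
        hy.comp_hasFDerivAt y (hnorm y)
      rw [hcomp.fderiv]
      simp [EuclideanSpace.inner_single_right]
    have hcoord : HasFDerivAt (fun y : EuclideanSpace ℝ (Fin N) => 2 * y i)
        ((2 : ℝ) • (EuclideanSpace.proj i : EuclideanSpace ℝ (Fin N) →L[ℝ] ℝ)) x :=
      (EuclideanSpace.proj i : EuclideanSpace ℝ (Fin N) →L[ℝ] ℝ).hasFDerivAt.const_mul 2
    have hmul : HasFDerivAt (fun y : EuclideanSpace ℝ (Fin N) => F₁ (‖y‖ ^ 2) * (2 * y i)) _ x :=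
      (h₂.comp_hasFDerivAt x (hnorm x)).mul hcoord
    rw [hfirst.fderiv_eq, hmul.fderiv]
    simp [EuclideanSpace.inner_single_right]
    ring
  rw [lap, Finset.sum_congr rfl fun i _ => hsecond i, Finset.sum_add_distrib, ← Finset.sum_mul,
    ← Finset.mul_sum, EuclideanSpace.norm_sq_eq]
  simp only [Finset.sum_const, Finset.card_univ, Fintype.card_fin, nsmul_eq_mul,
    Real.norm_eq_abs, sq_abs]
  ring

theorem lap_comp_norm {V V₁ : ℝ → ℝ} {V₂ : ℝ} {x : EuclideanSpace ℝ (Fin N)} (hx : x ≠ 0)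
    (h₁ : ∀ᶠ r in nhds ‖x‖, HasDerivAt V (V₁ r) r) (h₂ : HasDerivAt V₁ V₂ ‖x‖) :
    lap (fun y => V ‖y‖) x = V₂ + (N - 1) / ‖x‖ * V₁ ‖x‖ := by
  have hr : 0 < ‖x‖ := norm_pos_iff.2 hx
  have hsqrt : √(‖x‖ ^ 2) = ‖x‖ := Real.sqrt_sq hr.le
  have hfirst : ∀ᶠ s in nhds (‖x‖ ^ 2),
      HasDerivAt (fun s => V √s) (V₁ √s / (2 * √s)) s := by
    have hev : ∀ᶠ s in nhds (‖x‖ ^ 2), HasDerivAt V (V₁ √s) √s :=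
      (Real.continuous_sqrt.tendsto' _ _ hsqrt).eventually h₁
    filter_upwards [hev, lt_mem_nhds (pow_pos hr 2)] with s hs hs0
    exact (hs.comp s (Real.hasDerivAt_sqrt hs0.ne')).congr_deriv (mul_one_div _ _)
  have hsecond : HasDerivAt (fun s => V₁ √s / (2 * √s))
      (V₂ / (4 * ‖x‖ ^ 2) - V₁ ‖x‖ / (4 * ‖x‖ ^ 3)) (‖x‖ ^ 2) := by
    have hd := Real.hasDerivAt_sqrt (pow_pos hr 2).ne'
    have hV₁ : HasDerivAt V₁ V₂ √(‖x‖ ^ 2) := by rwa [hsqrt]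
    refine ((hV₁.comp _ hd).div (hd.const_mul 2) (by positivity)).congr_deriv ?_
    simp only [Function.comp_apply, hsqrt]
    field_simp
    ring
  have hlap := lap_comp_norm_sq hfirst hsecond
  simp only [Real.sqrt_sq (norm_nonneg _)] at hlap
  rw [hlap]
  field_simp
  ring

end Laplacian

/-! ### Radial classical solutions -/

namespace IsClassicalSolution

variable {N : ℕ} {lam : ℝ} {u : EuclideanSpace ℝ (Fin N) → ℝ}

theorem contDiffAt (h : IsClassicalSolution N lam u) {x : EuclideanSpace ℝ (Fin N)}
    (hx : x ∈ ball 0 1) : ContDiffAt ℝ 4 u x :=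
  h.contDiffOn.contDiffAt (mem_of_superset (isOpen_ball.mem_nhds hx) ball_subset_closedBall)

theorem comp_linearIsometryEquiv (h : IsClassicalSolution N lam u)
    (g : EuclideanSpace ℝ (Fin N) ≃ₗᵢ[ℝ] EuclideanSpace ℝ (Fin N)) :
    IsClassicalSolution N lam (u ∘ g) := by
  have hball {x} (hx : x ∈ ball (0 : EuclideanSpace ℝ (Fin N)) 1) : g x ∈ ball 0 1 := by
    simpa using hx
  refine ⟨h.contDiffOn.comp g.contDiff.contDiffOn fun x hx => by simpa using hx,
    fun x hx => h.pos _ (hball hx), fun x hx => h.lt_one _ (hball hx), fun x hx => ?_,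
    fun x hx => h.bdry (g x) (by simpa using hx), fun x hx => ?_⟩
  · have hlap : lap (u ∘ g) =ᶠ[nhds x] lap u ∘ g := by
      filter_upwards [isOpen_ball.mem_nhds hx] with y hy
      exact lap_comp_linearIsometryEquiv g ((h.contDiffAt (hball hy)).of_le (by norm_num))
    rw [Function.comp_apply, ← h.eqn (g x) (hball hx), biharm, lap_congr_of_eventuallyEq hlap,
      lap_comp_linearIsometryEquiv g (contDiffAt_lap (n := 2) (h.contDiffAt (hball hx))), biharm]
  · have hpre : (g.toContinuousLinearEquiv : EuclideanSpace ℝ (Fin N) → _) ⁻¹' closedBall 0 1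
        = closedBall 0 1 := by ext; simp
    have hunique : UniqueDiffWithinAt ℝ (closedBall (0 : EuclideanSpace ℝ (Fin N)) 1) x :=
      uniqueDiffWithinAt_convex (convex_closedBall _ _) (by simp [interior_closedBall])
        (subset_closure (by simp [hx]))
    have hcomp := g.toContinuousLinearEquiv.comp_right_fderivWithin (f := u)
      (s := closedBall 0 1) (x := x) (by rwa [hpre])
    rw [hpre] at hcomp
    exact (DFunLike.congr_fun hcomp x).trans (h.bdry_deriv (g x) (by simpa using hx))

end IsClassicalSolution

/-- `u` depends only on `‖x‖` inside the unit ball. -/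
def IsRadialOnBall {N : ℕ} (u : EuclideanSpace ℝ (Fin N) → ℝ) : Prop :=
  ∀ x ∈ ball (0 : EuclideanSpace ℝ (Fin N)) 1, ∀ y, ‖x‖ = ‖y‖ → u x = u y

/- Reflections permute the solutions, so the minimal one is invariant under all of them. -/
theorem IsClassicalSolution.isRadialOnBall_of_minimal {N : ℕ} {lam : ℝ}
    {u : EuclideanSpace ℝ (Fin N) → ℝ} (h : IsClassicalSolution N lam u)
    (hmin : ∀ v, IsClassicalSolution N lam v →
      ∀ x ∈ ball (0 : EuclideanSpace ℝ (Fin N)) 1, u x ≤ v x) : IsRadialOnBall u := by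
  have hle : ∀ x y : EuclideanSpace ℝ (Fin N), x ∈ ball 0 1 → ‖x‖ = ‖y‖ → u x ≤ u y := by
    intro x y hx hxy
    have := hmin _ (h.comp_linearIsometryEquiv (Submodule.reflection (ℝ ∙ (x - y))ᗮ)) x hx
    rwa [Function.comp_apply, Submodule.reflection_sub hxy] at this
  exact fun x hx y hxy => (hle x y hx hxy).antisymm
    (hle y x (by simpa [← hxy] using hx) hxy.symm)

theorem IsRadialOnBall.lap {N : ℕ} {u : EuclideanSpace ℝ (Fin N) → ℝ} (hu : IsRadialOnBall u)
    (hdiff : ∀ x ∈ ball (0 : EuclideanSpace ℝ (Fin N)) 1, ContDiffAt ℝ 2 u x) :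
    IsRadialOnBall (lap u) := by
  intro x hx y hxy
  have hy : y ∈ ball (0 : EuclideanSpace ℝ (Fin N)) 1 := by simpa [← hxy] using hx
  set g := Submodule.reflection (ℝ ∙ (x - y))ᗮ
  have hgx : g x = y := Submodule.reflection_sub hxy
  rw [← hgx, ← lap_comp_linearIsometryEquiv g (hdiff _ (by rwa [hgx]))]
  refine lap_congr_of_eventuallyEq ?_
  filter_upwards [isOpen_ball.mem_nhds hx] with z hz
  exact hu z hz _ (g.norm_map z).symm

section Ray

variable {m : ℕ} {u : EuclideanSpace ℝ (Fin (m + 1)) → ℝ} {e : EuclideanSpace ℝ (Fin (m + 1))}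

theorem smul_mem_ball_of_norm_eq_one (he : ‖e‖ = 1) {r : ℝ} (hr : r ∈ Ioo (-1) 1) :
    r • e ∈ ball 0 1 := by
  rwa [mem_ball_zero_iff, norm_smul, he, mul_one, Real.norm_eq_abs, abs_lt]

theorem contDiffAt_comp_smul (hu : ∀ x ∈ ball 0 1, ContDiffAt ℝ 2 u x) (he : ‖e‖ = 1) {r : ℝ}
    (hr : r ∈ Ioo (-1) 1) : ContDiffAt ℝ 2 (fun r : ℝ => u (r • e)) r :=
  ContDiffAt.comp r (hu _ (smul_mem_ball_of_norm_eq_one he hr))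
    (contDiffAt_id.smul contDiffAt_const)

theorem hasDerivAt_deriv_comp_smul (hu : ∀ x ∈ ball 0 1, ContDiffAt ℝ 2 u x) (he : ‖e‖ = 1)
    {r : ℝ} (hr : r ∈ Ioo (-1) 1) :
    HasDerivAt (deriv fun r : ℝ => u (r • e)) (deriv (deriv fun r : ℝ => u (r • e)) r) r :=
  ((((contDiffAt_comp_smul hu he hr).fderiv_right (m := 1) le_rfl).clm_apply
    contDiffAt_const).differentiableAt one_ne_zero).hasDerivAt

theorem hasDerivAt_pow_mul_deriv_comp_smul (hu : ∀ x ∈ ball 0 1, ContDiffAt ℝ 2 u x)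
    (hrad : IsRadialOnBall u) (he : ‖e‖ = 1) {r : ℝ} (hr : r ∈ Ioo 0 1) :
    HasDerivAt (fun r => r ^ m * deriv (fun r : ℝ => u (r • e)) r) (r ^ m * lap u (r • e)) r := by
  set V : ℝ → ℝ := fun r => u (r • e)
  have hr' : r ∈ Ioo (-1) 1 := ⟨by linarith [hr.1], hr.2⟩
  have hnorm : ‖r • e‖ = r := by rw [norm_smul, he, mul_one, Real.norm_of_nonneg hr.1.le]
  have hsecond : HasDerivAt (deriv V) (deriv (deriv V) r) r := hasDerivAt_deriv_comp_smul hu he hr'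
  have hcongr : u =ᶠ[nhds (r • e)] fun y => V ‖y‖ := by
    filter_upwards [isOpen_ball.mem_nhds (smul_mem_ball_of_norm_eq_one he hr')] with y hy
    exact hrad y hy _ (by rw [norm_smul, he, mul_one, norm_norm])
  have hfirst : ∀ᶠ s in nhds ‖r • e‖, HasDerivAt V (deriv V s) s := by
    rw [hnorm]
    filter_upwards [isOpen_Ioo.mem_nhds hr'] with s hs
    exact ((contDiffAt_comp_smul hu he hs).differentiableAt two_ne_zero).hasDerivAt
  have hlap : lap u (r • e) = deriv (deriv V) r + m / r * deriv V r := by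
    rw [lap_congr_of_eventuallyEq hcongr,
      lap_comp_norm (norm_pos_iff.1 (hnorm.symm ▸ hr.1)) hfirst (hnorm.symm ▸ hsecond), hnorm]
    push_cast
    ring
  refine ((hasDerivAt_pow m r).mul hsecond).congr_deriv ?_
  rw [hlap]
  have := hr.1.ne'
  rcases m with _ | m
  · simp
  · rw [Nat.add_sub_cancel]
    field_simp
    ring

/-- The radial profile of `u` read off along the unit vector `e`. The one-sided derivative keeps
`flux` meaningful at the boundary point `r = 1`. -/
noncomputable def rayProfile (u : EuclideanSpace ℝ (Fin (m + 1)) → ℝ)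
    (e : EuclideanSpace ℝ (Fin (m + 1))) : RadialProfile where
  val r := u (r • e)
  flux r := r ^ m * derivWithin (fun r : ℝ => u (r • e)) (Icc (-1) 1) r
  lap r := lap u (r • e)
  lapFlux r := r ^ m * deriv (fun r : ℝ => lap u (r • e)) r

variable {lam : ℝ}

theorem mapsTo_smul_closedBall (he : ‖e‖ = 1) :
    MapsTo (fun r : ℝ => r • e) (Icc (-1) 1) (closedBall 0 1) := fun r hr => by
  rwa [mem_closedBall_zero_iff, norm_smul, he, mul_one, Real.norm_eq_abs, abs_le]

namespace IsClassicalSolution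

theorem contDiffOn_comp_smul (h : IsClassicalSolution (m + 1) lam u) (he : ‖e‖ = 1) :
    ContDiffOn ℝ 4 (fun r : ℝ => u (r • e)) (Icc (-1) 1) :=
  h.contDiffOn.comp (contDiff_id.smul contDiff_const).contDiffOn (mapsTo_smul_closedBall he)

theorem isRadialSolution_rayProfile (hm : m ≠ 0) (h : IsClassicalSolution (m + 1) lam u)
    (hrad : IsRadialOnBall u) (he : ‖e‖ = 1) :
    IsRadialSolution m 1 (rayProfile u e) fun r => lam / (1 - u (r • e)) ^ 2 := by
  have hu : ∀ x ∈ ball 0 1, ContDiffAt ℝ 2 u x := fun x hx =>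
    (h.contDiffAt hx).of_le (by norm_num)
  have hlap : ∀ x ∈ ball 0 1, ContDiffAt ℝ 2 (lap u) x := fun x hx =>
    contDiffAt_lap (n := 2) (h.contDiffAt hx)
  have hsub : Icc 0 1 ⊆ Icc (-1 : ℝ) 1 := Icc_subset_Icc_left (by norm_num)
  have hmem {r : ℝ} (hr : r ∈ Ico 0 1) : r ∈ Ioo (-1) 1 := ⟨by linarith [hr.1], hr.2⟩
  have hmem' {r : ℝ} (hr : r ∈ Ioo 0 1) : r ∈ Ioo (-1) 1 := hmem (Ioo_subset_Ico_self hr)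
  have hderiv {r : ℝ} (hr : r ∈ Ioo (-1) 1) :
      derivWithin (fun r : ℝ => u (r • e)) (Icc (-1) 1) r = deriv (fun r : ℝ => u (r • e)) r :=
    derivWithin_of_mem_nhds (Icc_mem_nhds hr.1 hr.2)
  have hV := h.contDiffOn_comp_smul he
  refine
    { hasDerivAt_val := fun r hr => ?_
      hasDerivAt_flux := fun r hr => ?_
      hasDerivAt_lap := fun r hr => ?_
      hasDerivAt_lapFlux := fun r hr => ?_
      continuousOn_val := hV.continuousOn.mono hsub
      continuousOn_flux := ((continuousOn_pow m).mul (hV.continuousOn_derivWithin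
        (uniqueDiffOn_Icc (by norm_num)) (by norm_num))).mono hsub
      continuousOn_lapFlux := fun r hr => ((continuousAt_pow r m).mul
        (hasDerivAt_deriv_comp_smul hlap he (hmem hr)).continuousAt).continuousWithinAt
      flux_zero := by simp [rayProfile, hm]
      lapFlux_zero := by simp [rayProfile, hm] }
  · rw [rayProfile, mul_div_cancel_left₀ _ (pow_ne_zero _ hr.1.ne'), hderiv (hmem' hr)]
    exact ((contDiffAt_comp_smul hu he (hmem' hr)).differentiableAt two_ne_zero).hasDerivAt
  · refine (hasDerivAt_pow_mul_deriv_comp_smul hu hrad he hr).congr_of_eventuallyEq ?_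
    filter_upwards [isOpen_Ioo.mem_nhds (hmem' hr)] with s hs
    simp only [rayProfile, hderiv hs]
  · rw [rayProfile, mul_div_cancel_left₀ _ (pow_ne_zero _ hr.1.ne')]
    exact ((contDiffAt_comp_smul hlap he (hmem' hr)).differentiableAt two_ne_zero).hasDerivAt
  · rw [← h.eqn _ (smul_mem_ball_of_norm_eq_one he (hmem' hr))]
    exact hasDerivAt_pow_mul_deriv_comp_smul hlap (hrad.lap hu) he hr

theorem flux_rayProfile_one (h : IsClassicalSolution (m + 1) lam u) (he : ‖e‖ = 1) :
    (rayProfile u e).flux 1 = 0 := by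
  have hu : HasFDerivWithinAt u (fderivWithin ℝ u (closedBall 0 1) e) (closedBall 0 1)
      ((1 : ℝ) • e) := by
    rw [one_smul]
    exact (h.contDiffOn.differentiableOn (by norm_num) e (by simp [he])).hasFDerivWithinAt
  have hcomp := hu.comp_hasDerivWithinAt (1 : ℝ)
    ((hasDerivAt_id (1 : ℝ)).hasDerivWithinAt.smul_const e) (mapsTo_smul_closedBall he)
  have hderiv : derivWithin (fun r : ℝ => u (r • e)) (Icc (-1) 1) 1 = _ :=
    hcomp.derivWithin (uniqueDiffOn_Icc (by norm_num) 1 (by norm_num))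
  simp only [rayProfile, hderiv, one_smul, h.bdry_deriv e he, mul_zero]

end IsClassicalSolution

end Ray

/-! ### The maximum principle and stability for `Δ² - V` -/

/-- `z` is a nonnegative strict supersolution of `Δ² - V` in the ball of radius `R`, with source
`fz` and nonpositive outward derivative. The existence of such a `z` is the form in which the
stability of minimal solutions is used. -/
structure IsStrictSupersolution (m : ℕ) (R : ℝ) (V : ℝ → ℝ) (z : RadialProfile) (fz : ℝ → ℝ) :
    Prop extends IsRadialSolution m R z fz where
  val_nonneg : ∀ r ∈ Icc 0 R, 0 ≤ z.val r
  flux_nonpos : z.flux R ≤ 0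
  mul_val_lt : ∀ r ∈ Ioo 0 R, V r * z.val r < fz r

theorem intervalIntegrable_pow_mul (m : ℕ) {R : ℝ} (hR : 0 ≤ R) {f : ℝ → ℝ}
    (hf : ContinuousOn f (Icc 0 R)) : IntervalIntegrable (fun r => r ^ m * f r) volume 0 R :=
  ((continuousOn_pow m).mul hf).intervalIntegrable_of_Icc hR

namespace IsStrictSupersolution

variable {m : ℕ} {R : ℝ} {V fz : ℝ → ℝ} {z : RadialProfile}

theorem source_pos (hz : IsStrictSupersolution m R V z fz) (hV : ∀ r ∈ Icc 0 R, 0 ≤ V r) :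
    ∀ r ∈ Ioo 0 R, 0 < fz r := fun r hr =>
  have hr' := Ioo_subset_Icc_self hr
  (mul_nonneg (hV r hr') (hz.val_nonneg r hr')).trans_lt (hz.mul_val_lt r hr)

theorem val_pos (hz : IsStrictSupersolution m R V z fz) (hV : ∀ r ∈ Icc 0 R, 0 ≤ V r) :
    ∀ r ∈ Ico 0 R, 0 < z.val r := fun r hr =>
  hz.toIsRadialSolution.val_pos (hz.source_pos hV) hz.flux_nonpos
    (hz.val_nonneg R (right_mem_Icc.2 (hr.1.trans hr.2.le))) r hr

theorem restrict (hz : IsStrictSupersolution m R V z fz) (hV : ∀ r ∈ Icc 0 R, 0 ≤ V r) {S : ℝ}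
    (hS : S ∈ Ioo 0 R) : IsStrictSupersolution m S V z fz where
  toIsRadialSolution := hz.toIsRadialSolution.restrict hS.2.le
  val_nonneg r hr := hz.val_nonneg r ⟨hr.1, hr.2.trans hS.2.le⟩
  flux_nonpos := (hz.flux_neg (hz.source_pos hV) hz.flux_nonpos S hS).le
  mul_val_lt r hr := hz.mul_val_lt r ⟨hr.1, hr.2.trans hS.2⟩

theorem val_le (hz : IsStrictSupersolution m R V z fz) (hR : 0 < R) {k : RadialProfile}
    (hk : IsClampedSolution m R k fun r => V r * z.val r) :
    ∀ r ∈ Icc 0 R, k.val r ≤ z.val r := fun r hr =>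
  sub_nonneg.1 <| (hz.toIsRadialSolution.sub hk.toIsRadialSolution).val_nonneg
    (fun s hs => sub_nonneg.2 (hz.mul_val_lt s hs).le)
    (by simpa [hk.flux_right] using hz.flux_nonpos)
    (by simpa [hk.val_right] using hz.val_nonneg R (right_mem_Icc.2 hR.le)) r hr

theorem val_lt (hz : IsStrictSupersolution m R V z fz) {k : RadialProfile}
    (hk : IsClampedSolution m R k fun r => V r * z.val r) :
    ∀ r ∈ Ico 0 R, k.val r < z.val r := fun r hr =>
  sub_pos.1 <| (hz.toIsRadialSolution.sub hk.toIsRadialSolution).val_pos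
    (fun s hs => sub_pos.2 (hz.mul_val_lt s hs))
    (by simpa [hk.flux_right] using hz.flux_nonpos)
    (by simpa [hk.val_right] using hz.val_nonneg R (right_mem_Icc.2 (hr.1.trans hr.2.le))) r hr

/- With `k` the clamped solution of `Δ²k = V z`, symmetry of the Green operator gives
`∫ V φ z ≤ ∫ V z p = ∫ V φ k`, while `k < z`. -/
theorem eqOn_zero_of_le_val (hz : IsStrictSupersolution m R V z fz) (hR : 0 < R)
    (hVc : ContinuousOn V (Icc 0 R)) (hV : ∀ r ∈ Icc 0 R, 0 < V r) {φ : ℝ → ℝ}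
    (hφc : ContinuousOn φ (Icc 0 R)) (hφ : ∀ r ∈ Icc 0 R, 0 ≤ φ r) {p : RadialProfile}
    (hp : IsClampedSolution m R p fun r => V r * φ r) (hle : ∀ r ∈ Icc 0 R, φ r ≤ p.val r) :
    EqOn φ 0 (Icc 0 R) := by
  have hVφ := hVc.mul hφc
  have hVz := hVc.mul hz.continuousOn_val
  have hpow := continuousOn_pow (s := Icc 0 R) m
  obtain ⟨k, hk⟩ := exists_isClampedSolution m hR.le hVz
  have hleft : ∫ r in 0..R, r ^ m * (V r * φ r * z.val r)
      ≤ ∫ r in 0..R, r ^ m * (V r * φ r * k.val r) := by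
    rw [hp.symm hR hk hVφ hVz]
    refine intervalIntegral.integral_mono_on hR.le
      (intervalIntegrable_pow_mul m hR.le (hVφ.mul hz.continuousOn_val))
      (intervalIntegrable_pow_mul m hR.le (hVz.mul hp.continuousOn_val)) fun r hr => ?_
    rw [mul_right_comm]
    exact mul_le_mul_of_nonneg_left (mul_le_mul_of_nonneg_left (hle r hr)
      (mul_nonneg (hV r hr).le (hz.val_nonneg r hr))) (pow_nonneg hr.1 m)
  refine EqOn.of_subset_closure (s := Ioo 0 R) (fun r hr => ?_) hφc continuousOn_const
    Ioo_subset_Icc_self (closure_Ioo hR.ne).ge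
  by_contra hne
  have hr' := Ioo_subset_Icc_self hr
  have hφr : 0 < φ r := (hφ r hr').lt_of_ne' hne
  refine hleft.not_gt <| intervalIntegral.integral_lt_integral_of_continuousOn_of_le_of_exists_lt
    hR (hpow.mul (hVφ.mul hk.continuousOn_val)) (hpow.mul (hVφ.mul hz.continuousOn_val))
    (fun s hs => ?_) ⟨r, hr', ?_⟩
  · have hs' := Ioc_subset_Icc_self hs
    exact mul_le_mul_of_nonneg_left (mul_le_mul_of_nonneg_left (hz.val_le hR hk s hs')
      (mul_nonneg (hV s hs').le (hφ s hs'))) (pow_nonneg hs'.1 m)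
  · exact mul_lt_mul_of_pos_left (mul_lt_mul_of_pos_left (hz.val_lt hk r ⟨hr.1.le, hr.2⟩)
      (mul_pos (hV r hr') hφr)) (pow_pos hr.1 m)

theorem val_nonpos (hz : IsStrictSupersolution m R V z fz) (hR : 0 < R)
    (hVc : ContinuousOn V (Icc 0 R)) (hV : ∀ r ∈ Icc 0 R, 0 < V r) {w : RadialProfile}
    {fw : ℝ → ℝ} (hw : IsRadialSolution m R w fw) (hfw : ∀ r ∈ Ioo 0 R, fw r ≤ V r * w.val r)
    (hval : w.val R ≤ 0) (hflux : 0 ≤ w.flux R) : ∀ r ∈ Icc 0 R, w.val r ≤ 0 := by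
  have hφc : ContinuousOn (fun r => max (w.val r) 0) (Icc 0 R) :=
    hw.continuousOn_val.sup continuousOn_const
  obtain ⟨p, hp⟩ := exists_isClampedSolution m hR.le (hVc.mul hφc)
  have hp_nonneg := hp.val_nonneg fun r hr =>
    mul_nonneg (hV r (Ioo_subset_Icc_self hr)).le (le_max_right _ _)
  have hwp := (hp.toIsRadialSolution.sub hw).val_nonneg
    (fun r hr => sub_nonneg.2 <| (hfw r hr).trans <|
      mul_le_mul_of_nonneg_left (le_max_left _ _) (hV r (Ioo_subset_Icc_self hr)).le)
    (by simpa [hp.flux_right] using hflux) (by simpa [hp.val_right] using hval)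
  intro r hr
  exact max_eq_right_iff.1 <| hz.eqOn_zero_of_le_val hR hVc hV hφc (fun _ _ => le_max_right _ _) hp
    (fun s hs => max_le (sub_nonneg.1 (hwp s hs)) (hp_nonneg s hs)) hr

end IsStrictSupersolution

section Stability

variable {m : ℕ} {R : ℝ}

/- Positivity of the Green operator applied to `W (h - h x)² ≥ 0`. -/
theorem two_mul_mul_val_le {W h : ℝ → ℝ} (hW : ∀ r ∈ Ioo 0 R, 0 ≤ W r) {p₀ p₁ p₂ : RadialProfile}
    (h₀ : IsClampedSolution m R p₀ W) (h₁ : IsClampedSolution m R p₁ fun r => W r * h r)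
    (h₂ : IsClampedSolution m R p₂ fun r => W r * h r ^ 2) :
    ∀ x ∈ Icc 0 R, 2 * h x * p₁.val x ≤ h x ^ 2 * p₀.val x + p₂.val x := by
  intro x hx
  have hsol := (h₂.toIsRadialSolution.sub (h₁.smul (2 * h x))).add (h₀.smul (h x ^ 2))
  have hnonneg := hsol.val_nonneg
    (fun r hr => (mul_nonneg (hW r hr) (sq_nonneg (h r - h x))).trans_eq (by
      simp only [Pi.add_apply, Pi.sub_apply, Pi.smul_apply, smul_eq_mul]
      ring))
    (by simp [h₀.flux_right, h₁.flux_right, h₂.flux_right])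
    (by simp [h₀.val_right, h₁.val_right, h₂.val_right]) x hx
  simp only [RadialProfile.val_add, RadialProfile.val_sub, RadialProfile.val_smul] at hnonneg
  linarith

theorem integral_mul_mul_val_le {W h : ℝ → ℝ} (hR : 0 < R) (hWc : ContinuousOn W (Icc 0 R))
    (hhc : ContinuousOn h (Icc 0 R)) (hW : ∀ r ∈ Icc 0 R, 0 ≤ W r) {p₀ p₁ : RadialProfile}
    (h₀ : IsClampedSolution m R p₀ W) (h₁ : IsClampedSolution m R p₁ fun r => W r * h r) :
    ∫ r in 0..R, r ^ m * (W r * h r * p₁.val r)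
      ≤ ∫ r in 0..R, r ^ m * (W r * h r ^ 2 * p₀.val r) := by
  have hWh2 : ContinuousOn (fun r => W r * h r ^ 2) (Icc 0 R) := hWc.mul (hhc.pow 2)
  obtain ⟨p₂, h₂⟩ := exists_isClampedSolution m hR.le hWh2
  have hint₀ := intervalIntegrable_pow_mul m hR.le (hWh2.fun_mul h₀.continuousOn_val)
  have hint₁ := intervalIntegrable_pow_mul m hR.le
    ((hWc.fun_mul hhc).fun_mul h₁.continuousOn_val)
  have hint₂ := intervalIntegrable_pow_mul m hR.le (hWc.fun_mul h₂.continuousOn_val)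
  have hmono := intervalIntegral.integral_mono_on hR.le (hint₁.const_mul 2) (hint₀.add hint₂)
    fun r hr => by
      have := mul_le_mul_of_nonneg_left (two_mul_mul_val_le
        (fun s hs => hW s (Ioo_subset_Icc_self hs)) h₀ h₁ h₂ r hr)
        (mul_nonneg (pow_nonneg hr.1 m) (hW r hr))
      linarith
  rw [intervalIntegral.integral_const_mul, intervalIntegral.integral_add hint₀ hint₂,
    h₀.symm hR h₂ hWc hWh2] at hmono
  linarith

theorem IsStrictSupersolution.integral_sq_lap_le {V fz h : ℝ → ℝ} {z q : RadialProfile}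
    (hz : IsStrictSupersolution m R V z fz) (hR : 0 < R) (hVc : ContinuousOn V (Icc 0 R))
    (hV : ∀ r ∈ Icc 0 R, 0 ≤ V r) (hhc : ContinuousOn h (Icc 0 R))
    (hq : IsClampedSolution m R q fun r => V r * (h r * z.val r)) :
    ∫ r in 0..R, r ^ m * (q.lap r * q.lap r)
      ≤ ∫ r in 0..R, r ^ m * (V r * (h r * z.val r) ^ 2) := by
  have hzc := hz.continuousOn_val
  have hVz : ContinuousOn (fun r => V r * z.val r) (Icc 0 R) := hVc.mul hzc
  obtain ⟨k, hk⟩ := exists_isClampedSolution m hR.le hVz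
  have hVz_nonneg : ∀ r ∈ Icc 0 R, 0 ≤ V r * z.val r := fun r hr =>
    mul_nonneg (hV r hr) (hz.val_nonneg r hr)
  rw [← hq.green hR hq (hVc.mul (hhc.mul hzc))]
  calc ∫ r in 0..R, r ^ m * (V r * (h r * z.val r) * q.val r)
      = ∫ r in 0..R, r ^ m * (V r * z.val r * h r * q.val r) := by
        simp only [mul_comm (h _), mul_assoc]
    _ ≤ ∫ r in 0..R, r ^ m * (V r * z.val r * h r ^ 2 * k.val r) :=
        integral_mul_mul_val_le hR hVz hhc hVz_nonneg hk (hq.congr fun r _ => by ring)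
    _ ≤ ∫ r in 0..R, r ^ m * (V r * (h r * z.val r) ^ 2) := by
        refine intervalIntegral.integral_mono_on hR.le
          (intervalIntegrable_pow_mul m hR.le ((hVz.mul (hhc.pow 2)).mul hk.continuousOn_val))
          (intervalIntegrable_pow_mul m hR.le (hVc.mul ((hhc.mul hzc).pow 2))) fun r hr => ?_
        calc r ^ m * (V r * z.val r * h r ^ 2 * k.val r)
            ≤ r ^ m * (V r * z.val r * h r ^ 2 * z.val r) := by
              have := pow_nonneg hr.1 m
              have := hVz_nonneg r hr
              have := hz.val_le hR hk r hr
              gcongr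
          _ = r ^ m * (V r * (h r * z.val r) ^ 2) := by ring

/-- `ψ` is a radial test function on the annulus `α ≤ ‖x‖ ≤ β` of `ℝ^(m+1)`, with flux
`ψflux = r^m ψ'` and Laplacian `ψlap`, vanishing to first order at both ends. -/
structure IsAnnularTest (m : ℕ) (α β : ℝ) (ψ ψflux ψlap : ℝ → ℝ) : Prop where
  hasDerivAt : ∀ r ∈ Ioo α β, HasDerivAt ψ (ψflux r / r ^ m) r
  hasDerivAt_flux : ∀ r ∈ Ioo α β, HasDerivAt ψflux (r ^ m * ψlap r) r
  continuousOn : ContinuousOn ψ (Icc α β)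
  continuousOn_flux : ContinuousOn ψflux (Icc α β)
  continuousOn_lap : ContinuousOn ψlap (Icc α β)
  left : ψ α = 0
  right : ψ β = 0
  flux_left : ψflux α = 0
  flux_right : ψflux β = 0

/- The function equal to `ψ` on `[α, β]` and `0` elsewhere is a multiple `h z` of the
supersolution. -/
theorem IsStrictSupersolution.exists_mul_val_eq {V fz ψ : ℝ → ℝ} {z : RadialProfile}
    (hz : IsStrictSupersolution m R V z fz) (hV : ∀ r ∈ Icc 0 R, 0 ≤ V r) {α β : ℝ}
    (hα : 0 ≤ α) (hαβ : α ≤ β) (hβ : β < R) (hψ : ContinuousOn ψ (Icc α β))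
    (hψα : ψ α = 0) (hψβ : ψ β = 0) :
    ∃ h, Continuous h ∧ (∀ r ∈ Icc α β, h r * z.val r = ψ r) ∧ ∀ r ∉ Ioo α β, h r = 0 := by
  have hzpos : ∀ r ∈ Icc α β, z.val r ≠ 0 := fun r hr =>
    (hz.val_pos hV r ⟨hα.trans hr.1, hr.2.trans_lt hβ⟩).ne'
  have hsub : Icc α β ⊆ Icc 0 R := Icc_subset_Icc hα hβ.le
  refine ⟨IccExtend hαβ ((Icc α β).domRestrict fun r => ψ r / z.val r),
    (hψ.div (hz.continuousOn_val.mono hsub) hzpos).domRestrict.Icc_extend', fun r hr => ?_,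
    fun r hr => ?_⟩
  · simp [IccExtend_of_mem _ _ hr, div_mul_cancel₀ _ (hzpos r hr)]
  · rcases le_or_gt r α with h | h
    · simp [IccExtend_of_le_left _ _ h, hψα]
    · simp [IccExtend_of_right_le _ _ (not_lt.1 fun h' => hr ⟨h, h'⟩), hψβ]

theorem IsClampedSolution.integral_source_mul_eq {f ψ ψflux ψlap : ℝ → ℝ} {q : RadialProfile}
    {α β : ℝ} (hq : IsClampedSolution m R q f) (hψ : IsAnnularTest m α β ψ ψflux ψlap)
    (hα : 0 ≤ α) (hαβ : α ≤ β) (hβ : β ≤ R) (hf : ContinuousOn f (Icc α β)) :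
    ∫ r in α..β, r ^ m * (f r * ψ r) = ∫ r in α..β, r ^ m * (q.lap r * ψlap r) := by
  have hsub : Icc α β ⊆ Icc 0 R := Icc_subset_Icc hα hβ
  have hpow := continuousOn_pow (s := Icc α β) m
  have hlap := hq.continuousOn_lap.mono hsub
  have hint_left : IntervalIntegrable (fun r => r ^ m * (f r * ψ r)) volume α β :=
    (hpow.mul (hf.mul hψ.continuousOn)).intervalIntegrable_of_Icc hαβ
  have hint_right : IntervalIntegrable (fun r => r ^ m * (q.lap r * ψlap r)) volume α β :=
    (hpow.mul (hlap.mul hψ.continuousOn_lap)).intervalIntegrable_of_Icc hαβ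
  have hftc := intervalIntegral.integral_eq_sub_of_hasDerivAt_of_le hαβ
    (f := fun r => q.lapFlux r * ψ r - q.lap r * ψflux r)
    (f' := fun r => r ^ m * (f r * ψ r) - r ^ m * (q.lap r * ψlap r))
    (((hq.continuousOn_lapFlux'.mono hsub).mul hψ.continuousOn).sub
      (hlap.mul hψ.continuousOn_flux))
    (fun r hr => by
      have hr' : r ∈ Ioo 0 R := ⟨hα.trans_lt hr.1, hr.2.trans_le hβ⟩
      refine (((hq.hasDerivAt_lapFlux r hr').mul (hψ.hasDerivAt r hr)).sub
        ((hq.hasDerivAt_lap r hr').mul (hψ.hasDerivAt_flux r hr))).congr_deriv ?_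
      ring)
    (hint_left.sub hint_right)
  rw [intervalIntegral.integral_sub hint_left hint_right] at hftc
  simpa [hψ.left, hψ.right, hψ.flux_left, hψ.flux_right, sub_eq_zero] using hftc

theorem integral_eq_of_eq_zero_off {f : ℝ → ℝ} {a b α β : ℝ} (hα : a ≤ α) (hαβ : α ≤ β)
    (hβ : β ≤ b) (hf : IntervalIntegrable f volume a b) (hzero : ∀ r ∉ Ioo α β, f r = 0) :
    ∫ r in a..b, f r = ∫ r in α..β, f r := by
  have hαb := hαβ.trans hβ
  have hint {c d : ℝ} (hc : a ≤ c) (hcd : c ≤ d) (hd : d ≤ b) : IntervalIntegrable f volume c d :=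
    hf.mono_set (by
      rw [uIcc_of_le hcd, uIcc_of_le (hc.trans (hcd.trans hd))]
      exact Icc_subset_Icc hc hd)
  have hleft : ∫ r in a..α, f r = 0 := intervalIntegral.integral_zero_ae <| .of_forall
    fun r hr => hzero r fun h => h.1.not_ge (uIoc_of_le hα ▸ hr).2
  have hright : ∫ r in β..b, f r = 0 := intervalIntegral.integral_zero_ae <| .of_forall
    fun r hr => hzero r fun h => h.2.not_gt (uIoc_of_le hβ ▸ hr).1
  rw [← intervalIntegral.integral_add_adjacent_intervals (hint le_rfl hα hαb)
    (hint hα hαb le_rfl), ← intervalIntegral.integral_add_adjacent_intervals (hint hα hαβ hβ)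
    (hint (hα.trans hαβ) hβ le_rfl), hleft, hright, zero_add, add_zero]

theorem two_mul_integral_pow_mul_le (m : ℕ) {f g : ℝ → ℝ} {α β : ℝ} (hα : 0 ≤ α) (hαβ : α ≤ β)
    (hf : ContinuousOn f (Icc α β)) (hg : ContinuousOn g (Icc α β)) :
    2 * ∫ r in α..β, r ^ m * (f r * g r)
      ≤ (∫ r in α..β, r ^ m * (f r * f r)) + ∫ r in α..β, r ^ m * g r ^ 2 := by
  have hpow := continuousOn_pow (s := Icc α β) m
  have hint_ff := (hpow.fun_mul (hf.fun_mul hf)).intervalIntegrable_of_Icc (μ := volume) hαβ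
  have hint_gg := (hpow.fun_mul (hg.fun_pow 2)).intervalIntegrable_of_Icc (μ := volume) hαβ
  have hint_fg := (hpow.fun_mul (hf.fun_mul hg)).intervalIntegrable_of_Icc (μ := volume) hαβ
  rw [← intervalIntegral.integral_const_mul, ← intervalIntegral.integral_add hint_ff hint_gg]
  refine intervalIntegral.integral_mono_on hαβ (hint_fg.const_mul 2) (hint_ff.add hint_gg)
    fun r hr => ?_
  have := mul_nonneg (pow_nonneg (hα.trans hr.1) m) (sq_nonneg (f r - g r))
  linarith

/- If `Δ²q = V ψ` then `I := ∫ V ψ² = ∫ Δq Δψ`, while `∫ (Δq)² ≤ I`; hence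
`0 ≤ ∫ (Δq - Δψ)² ≤ ∫ (Δψ)² - I`. -/
theorem IsStrictSupersolution.integral_mul_sq_le {V fz ψ ψflux ψlap : ℝ → ℝ} {z : RadialProfile}
    {α β : ℝ} (hz : IsStrictSupersolution m R V z fz) (hVc : ContinuousOn V (Icc 0 R))
    (hV : ∀ r ∈ Icc 0 R, 0 ≤ V r) (hψ : IsAnnularTest m α β ψ ψflux ψlap)
    (hα : 0 ≤ α) (hαβ : α ≤ β) (hβ : β < R) :
    ∫ r in α..β, r ^ m * (V r * ψ r ^ 2) ≤ ∫ r in α..β, r ^ m * ψlap r ^ 2 := by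
  have hR : 0 < R := (hα.trans hαβ).trans_lt hβ
  have hsub : Icc α β ⊆ Icc 0 R := Icc_subset_Icc hα hβ.le
  obtain ⟨h, hhc, hhz, hh_off⟩ :=
    hz.exists_mul_val_eq hV hα hαβ hβ hψ.continuousOn hψ.left hψ.right
  have hφc := hhc.continuousOn.fun_mul hz.continuousOn_val
  obtain ⟨q, hq⟩ := exists_isClampedSolution m hR.le (hVc.fun_mul hφc)
  have hlap := hq.continuousOn_lap
  have hsource : ∫ r in 0..R, r ^ m * (V r * (h r * z.val r) ^ 2)
      = ∫ r in α..β, r ^ m * (V r * ψ r ^ 2) := by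
    rw [integral_eq_of_eq_zero_off hα hαβ hβ.le
      (intervalIntegrable_pow_mul m hR.le (hVc.fun_mul (hφc.fun_pow 2)))
      fun r hr => by simp [hh_off r hr]]
    refine intervalIntegral.integral_congr fun r hr => ?_
    simp only [hhz r (uIcc_of_le hαβ ▸ hr)]
  have hlocal : ∫ r in α..β, r ^ m * (q.lap r * q.lap r)
      ≤ ∫ r in 0..R, r ^ m * (q.lap r * q.lap r) := by
    refine intervalIntegral.integral_mono_interval hα hαβ hβ.le ?_
      (intervalIntegrable_pow_mul m hR.le (hlap.fun_mul hlap))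
    filter_upwards [ae_restrict_mem measurableSet_Ioc] with r hr
    exact mul_nonneg (pow_nonneg hr.1.le m) (mul_self_nonneg _)
  have hcross : ∫ r in α..β, r ^ m * (V r * ψ r ^ 2)
      = ∫ r in α..β, r ^ m * (q.lap r * ψlap r) := by
    rw [← hq.integral_source_mul_eq hψ hα hαβ hβ.le ((hVc.fun_mul hφc).mono hsub)]
    refine intervalIntegral.integral_congr fun r hr => ?_
    simp only [hhz r (uIcc_of_le hαβ ▸ hr)]
    ring
  have hstable := hz.integral_sq_lap_le hR hVc hV hhc.continuousOn hq
  have hsquare := two_mul_integral_pow_mul_le m hα hαβ (hlap.mono hsub) hψ.continuousOn_lap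
  linarith

end Stability

/-! ### A lower bound on the potential violating stability -/

/-- The radial test function with which stability is tested. The power `r ^ ((3 - m) / 2)` is the
critical one for the Hardy-Rellich inequality in dimension `m + 1`, and the oscillating factor makes
it compactly supported in the annuli between two radii `hardyRadius k`. -/
noncomputable def hardyTest (m : ℕ) (r : ℝ) : ℝ :=
  r ^ ((3 - m : ℝ) / 2) * (1 - Real.cos (Real.log r / 2))

/-- The flux `r ^ m ψ'` of the test function `ψ = hardyTest m`. -/
noncomputable def hardyTestFlux (m : ℕ) (r : ℝ) : ℝ :=
  r ^ m * (r ^ ((3 - m : ℝ) / 2) *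
    ((3 - m : ℝ) / 2 * (1 - Real.cos (Real.log r / 2)) + Real.sin (Real.log r / 2) / 2) / r)

/-- The square root `N (N - 4) / 4` of the Hardy-Rellich constant `H_N` in dimension
`N = m + 1`; it is negative for `N < 4`. -/
noncomputable def sqrtRellich (m : ℕ) : ℝ := (m + 1) * (m - 3) / 4

/-- The trigonometric factor of the Laplacian of `hardyTest m`, where `c = sqrtRellich m`. -/
noncomputable def hardyFactor (c θ : ℝ) : ℝ := -c + (c + 1 / 4) * Real.cos θ + Real.sin θ

/-- The Laplacian of `hardyTest m` in dimension `m + 1`. -/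
noncomputable def hardyTestLap (m : ℕ) (r : ℝ) : ℝ :=
  r ^ ((3 - m : ℝ) / 2) * hardyFactor (sqrtRellich m) (Real.log r / 2) / r ^ 2

/-- The radii `exp (4 π k)` at which the test functions `hardyTest m` and their derivatives
vanish. -/
noncomputable def hardyRadius (k : ℤ) : ℝ := Real.exp (2 * (k * (2 * Real.pi)))

theorem hardyRadius_pos (k : ℤ) : 0 < hardyRadius k := Real.exp_pos _

theorem hardyRadius_zero : hardyRadius 0 = 1 := by simp [hardyRadius]

theorem strictMono_hardyRadius : StrictMono hardyRadius := fun k l hkl => by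
  unfold hardyRadius
  gcongr

theorem log_hardyRadius_div_two (k : ℤ) : Real.log (hardyRadius k) / 2 = k * (2 * Real.pi) := by
  rw [hardyRadius, Real.log_exp, mul_div_cancel_left₀ _ two_ne_zero]

section HardyTest

variable {m : ℕ} {r : ℝ}

theorem hasDerivAt_rpow_const_div (p : ℝ) (hr : 0 < r) :
    HasDerivAt (fun x : ℝ => x ^ p) (p * r ^ p / r) r :=
  (Real.hasDerivAt_rpow_const (Or.inl hr.ne')).congr_deriv
    (by rw [Real.rpow_sub_one hr.ne', mul_div_assoc])

theorem hasDerivAt_log_div_two (hr : 0 < r) :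
    HasDerivAt (fun x => Real.log x / 2) (1 / (2 * r)) r :=
  ((Real.hasDerivAt_log hr.ne').div_const 2).congr_deriv (by field_simp)

theorem hasDerivAt_hardyTest (hr : 0 < r) :
    HasDerivAt (hardyTest m) (hardyTestFlux m r / r ^ m) r := by
  refine ((hasDerivAt_rpow_const_div ((3 - m : ℝ) / 2) hr).mul
    ((hasDerivAt_log_div_two hr).cos.const_sub 1)).congr_deriv ?_
  unfold hardyTestFlux
  field_simp

theorem hasDerivAt_hardyTestFlux (hr : 0 < r) :
    HasDerivAt (hardyTestFlux m) (r ^ m * hardyTestLap m r) r := by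
  have hθ := hasDerivAt_log_div_two hr
  have hpow : HasDerivAt (fun x : ℝ => x ^ m) (m * r ^ m / r) r := by
    simpa only [Real.rpow_natCast] using hasDerivAt_rpow_const_div (m : ℝ) hr
  have hamp := (hθ.cos.const_sub 1).const_mul ((3 - m : ℝ) / 2) |>.add (hθ.sin.div_const 2)
  refine (hpow.mul (((hasDerivAt_rpow_const_div ((3 - m : ℝ) / 2) hr).mul hamp).div
    (hasDerivAt_id r) hr.ne')).congr_deriv ?_
  simp only [hardyTestLap, hardyFactor, sqrtRellich, Pi.add_apply, Pi.mul_apply, Pi.div_apply, id]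
  field_simp
  ring

theorem continuous_hardyFactor (c : ℝ) : Continuous (hardyFactor c) := by
  unfold hardyFactor
  fun_prop

theorem continuousOn_hardyTestLap : ContinuousOn (hardyTestLap m) (Ioi 0) := by
  have hne : ∀ r ∈ Ioi (0 : ℝ), r ≠ 0 := fun r hr => (mem_Ioi.1 hr).ne'
  have hlog := Real.continuousOn_log.mono hne
  exact ((continuousOn_id.rpow_const fun r hr => Or.inl (hne r hr)).mul
    ((continuous_hardyFactor _).comp_continuousOn (hlog.div_const 2))).div (continuousOn_pow 2)
    fun r hr => pow_ne_zero 2 (hne r hr)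

theorem hardyTest_hardyRadius (m : ℕ) (k : ℤ) : hardyTest m (hardyRadius k) = 0 := by
  simp only [hardyTest, log_hardyRadius_div_two, Real.cos_int_mul_two_pi, sub_self, mul_zero]

theorem hardyTestFlux_hardyRadius (m : ℕ) (k : ℤ) : hardyTestFlux m (hardyRadius k) = 0 := by
  have hsin : Real.sin (k * (2 * Real.pi)) = 0 := by
    simpa using Real.sin_periodic.int_mul_eq k
  simp only [hardyTestFlux, log_hardyRadius_div_two, Real.cos_int_mul_two_pi, hsin, sub_self,
    mul_zero, zero_div, add_zero]

theorem isAnnularTest_hardyTest (m : ℕ) (k l : ℤ) :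
    IsAnnularTest m (hardyRadius k) (hardyRadius l)
      (hardyTest m) (hardyTestFlux m) (hardyTestLap m) where
  hasDerivAt _ hr := hasDerivAt_hardyTest ((hardyRadius_pos k).trans hr.1)
  hasDerivAt_flux _ hr := hasDerivAt_hardyTestFlux ((hardyRadius_pos k).trans hr.1)
  continuousOn _ hr := (hasDerivAt_hardyTest
    ((hardyRadius_pos k).trans_le hr.1)).continuousAt.continuousWithinAt
  continuousOn_flux _ hr := (hasDerivAt_hardyTestFlux
    ((hardyRadius_pos k).trans_le hr.1)).continuousAt.continuousWithinAt
  continuousOn_lap := continuousOn_hardyTestLap.mono fun _ hr => (hardyRadius_pos k).trans_le hr.1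
  left := hardyTest_hardyRadius m k
  right := hardyTest_hardyRadius m l
  flux_left := hardyTestFlux_hardyRadius m k
  flux_right := hardyTestFlux_hardyRadius m l

theorem sq_rpow_mul_pow (m : ℕ) (hr : 0 < r) : (r ^ ((3 - m : ℝ) / 2)) ^ 2 * r ^ m = r ^ 3 := by
  rw [← Real.rpow_natCast, ← Real.rpow_natCast, ← Real.rpow_mul hr.le, ← Real.rpow_add hr,
    ← Real.rpow_natCast]
  congr 1
  push_cast
  ring

theorem pow_mul_hardyTest_sq (m : ℕ) (κ : ℝ) (hr : 0 < r) :
    r ^ m * (κ / r ^ 4 * hardyTest m r ^ 2)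
      = κ * (1 - Real.cos (Real.log r / 2)) ^ 2 / r := by
  have hpow := sq_rpow_mul_pow m hr
  calc r ^ m * (κ / r ^ 4 * hardyTest m r ^ 2)
      = ((r ^ ((3 - m : ℝ) / 2)) ^ 2 * r ^ m)
          * (κ * (1 - Real.cos (Real.log r / 2)) ^ 2) / r ^ 4 := by
        unfold hardyTest
        ring
    _ = κ * (1 - Real.cos (Real.log r / 2)) ^ 2 / r := by
        rw [hpow]
        field_simp

theorem pow_mul_hardyTestLap_sq (m : ℕ) (hr : 0 < r) :
    r ^ m * hardyTestLap m r ^ 2 = hardyFactor (sqrtRellich m) (Real.log r / 2) ^ 2 / r := by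
  have hpow := sq_rpow_mul_pow m hr
  calc r ^ m * hardyTestLap m r ^ 2
      = ((r ^ ((3 - m : ℝ) / 2)) ^ 2 * r ^ m)
          * hardyFactor (sqrtRellich m) (Real.log r / 2) ^ 2 / r ^ 4 := by
        unfold hardyTestLap
        ring
    _ = hardyFactor (sqrtRellich m) (Real.log r / 2) ^ 2 / r := by
        rw [hpow]
        field_simp

end HardyTest

theorem pos_of_mem_uIcc_hardyRadius {k : ℤ} {r : ℝ}
    (hr : r ∈ uIcc (hardyRadius k) (hardyRadius (k + 1))) : 0 < r :=
  (lt_min (hardyRadius_pos k) (hardyRadius_pos (k + 1))).trans_le hr.1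

theorem integral_hardyRadius_comp_log {g : ℝ → ℝ} (hg : Continuous g) (k : ℤ) :
    ∫ r in hardyRadius k..hardyRadius (k + 1), g (Real.log r / 2) / r
      = 2 * ∫ θ in k * (2 * Real.pi)..k * (2 * Real.pi) + 2 * Real.pi, g θ := by
  have hend : ((k + 1 : ℤ) : ℝ) * (2 * Real.pi) = k * (2 * Real.pi) + 2 * Real.pi := by
    push_cast
    ring
  have hpos := fun r => pos_of_mem_uIcc_hardyRadius (k := k) (r := r)
  have hsubst := intervalIntegral.integral_comp_mul_deriv (g := g)
    (fun r hr => hasDerivAt_log_div_two (hpos r hr))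
    (continuousOn_const.div (continuousOn_const.mul continuousOn_id)
      fun r hr => mul_ne_zero two_ne_zero (hpos r hr).ne') hg
  rw [log_hardyRadius_div_two, log_hardyRadius_div_two, hend] at hsubst
  rw [← hsubst, ← intervalIntegral.integral_const_mul]
  exact intervalIntegral.integral_congr fun r _ => by
    simp only [Function.comp_apply]
    ring

theorem integral_one_sub_cos_sq (a : ℝ) :
    ∫ θ in a..a + 2 * Real.pi, (1 - Real.cos θ) ^ 2 = 3 * Real.pi := by
  rw [intervalIntegral.integral_eq_sub_of_hasDerivAt
    (f := fun θ => 3 / 2 * θ - 2 * Real.sin θ + Real.sin θ * Real.cos θ / 2) (fun θ _ => ?_)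
    (Continuous.intervalIntegrable (by fun_prop) _ _)]
  · simp only [Real.sin_add_two_pi, Real.cos_add_two_pi]
    ring
  · refine ((((hasDerivAt_id θ).const_mul (3 / 2)).sub ((Real.hasDerivAt_sin θ).const_mul 2)).add
      (((Real.hasDerivAt_sin θ).mul (Real.hasDerivAt_cos θ)).div_const 2)).congr_deriv ?_
    linear_combination (-1 / 2) * Real.sin_sq_add_cos_sq θ

theorem integral_hardyFactor_sq (c a : ℝ) :
    ∫ θ in a..a + 2 * Real.pi, hardyFactor c θ ^ 2
      = Real.pi * (2 * c ^ 2 + (c + 1 / 4) ^ 2 + 1) := by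
  unfold hardyFactor
  rw [intervalIntegral.integral_eq_sub_of_hasDerivAt
    (f := fun θ => (2 * c ^ 2 + (c + 1 / 4) ^ 2 + 1) / 2 * θ
      + ((c + 1 / 4) ^ 2 - 1) / 2 * (Real.sin θ * Real.cos θ)
      - 2 * c * (c + 1 / 4) * Real.sin θ + 2 * c * Real.cos θ
      + (c + 1 / 4) * (Real.sin θ * Real.sin θ)) (fun θ _ => ?_)
    (Continuous.intervalIntegrable (by fun_prop) _ _)]
  · simp only [Real.sin_add_two_pi, Real.cos_add_two_pi]
    ring
  · have hsin := Real.hasDerivAt_sin θ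
    have hcos := Real.hasDerivAt_cos θ
    refine ((((((hasDerivAt_id θ).const_mul _).add ((hsin.mul hcos).const_mul _)).sub
      (hsin.const_mul _)).add (hcos.const_mul _)).add
      ((hsin.mul hsin).const_mul _)).congr_deriv ?_
    linear_combination (-((c + 1 / 4) ^ 2 + 1) / 2) * Real.sin_sq_add_cos_sq θ

theorem integral_pow_mul_hardyTest_sq (m : ℕ) (κ : ℝ) (k : ℤ) :
    ∫ r in hardyRadius k..hardyRadius (k + 1), r ^ m * (κ / r ^ 4 * hardyTest m r ^ 2)
      = 6 * Real.pi * κ := by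
  rw [intervalIntegral.integral_congr fun r hr =>
      pow_mul_hardyTest_sq m κ (pos_of_mem_uIcc_hardyRadius hr),
    integral_hardyRadius_comp_log (g := fun θ => κ * (1 - Real.cos θ) ^ 2) (by fun_prop),
    intervalIntegral.integral_const_mul, integral_one_sub_cos_sq]
  ring

theorem integral_pow_mul_hardyTestLap_sq (m : ℕ) (k : ℤ) :
    ∫ r in hardyRadius k..hardyRadius (k + 1), r ^ m * hardyTestLap m r ^ 2
      = 2 * Real.pi * (2 * sqrtRellich m ^ 2 + (sqrtRellich m + 1 / 4) ^ 2 + 1) := by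
  rw [intervalIntegral.integral_congr fun r hr =>
      pow_mul_hardyTestLap_sq m (pos_of_mem_uIcc_hardyRadius hr),
    integral_hardyRadius_comp_log (g := fun θ => hardyFactor (sqrtRellich m) θ ^ 2)
      ((continuous_hardyFactor _).pow 2), integral_hardyFactor_sq, mul_assoc]

theorem IsStrictSupersolution.potential_const_le {m : ℕ} {R κ : ℝ} {V fz : ℝ → ℝ}
    {z : RadialProfile} (hz : IsStrictSupersolution m R V z fz) (hVc : ContinuousOn V (Icc 0 R))
    (hV : ∀ r ∈ Icc 0 R, 0 ≤ V r) {k : ℤ} (hk : hardyRadius (k + 1) < R)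
    (hVκ : ∀ r ∈ Icc (hardyRadius k) (hardyRadius (k + 1)), κ / r ^ 4 ≤ V r) :
    3 / 2 * κ ≤ sqrtRellich m ^ 2 + (sqrtRellich m + 1 / 4) ^ 2 / 2 + 1 / 2 := by
  have hα := hardyRadius_pos k
  have hle := (strictMono_hardyRadius (lt_add_one k)).le
  have hψ := isAnnularTest_hardyTest m k (k + 1)
  have hpow : ContinuousOn (fun r : ℝ => r ^ m) (Icc (hardyRadius k) (hardyRadius (k + 1))) :=
    continuousOn_pow m
  have hmono := intervalIntegral.integral_mono_on (μ := volume) hle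
    (f := fun r => r ^ m * (κ / r ^ 4 * hardyTest m r ^ 2))
    (g := fun r => r ^ m * (V r * hardyTest m r ^ 2))
    ((hpow.mul ((continuousOn_const.div (continuousOn_pow 4) fun r hr =>
      (pow_pos (hα.trans_le hr.1) 4).ne').mul
        (hψ.continuousOn.pow 2))).intervalIntegrable_of_Icc hle)
    ((hpow.mul ((hVc.mono (Icc_subset_Icc hα.le hk.le)).mul
      (hψ.continuousOn.pow 2))).intervalIntegrable_of_Icc hle)
    fun r hr => by
      have hr0 := hα.trans_le hr.1
      have hVr := hVκ r hr
      gcongr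
  have hstab := hmono.trans (hz.integral_mul_sq_le hVc hV hψ hα.le hle hk)
  rw [integral_pow_mul_hardyTest_sq, integral_pow_mul_hardyTestLap_sq] at hstab
  nlinarith [Real.pi_pos]

/-! ### Comparison with `1 - C r ^ (4 / 3)` -/

/-- The derivative of the nonlinearity `x ↦ lam / (1 - x) ^ 2`. -/
noncomputable def memsPotential (lam x : ℝ) : ℝ := 2 * lam / (1 - x) ^ 3

theorem memsPotential_pos {lam x : ℝ} (hlam : 0 < lam) (hx : x < 1) : 0 < memsPotential lam x :=
  div_pos (mul_pos two_pos hlam) (pow_pos (sub_pos.2 hx) 3)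

theorem memsPotential_mul_sub_le {lam x y : ℝ} (hlam : 0 ≤ lam) (hx : x < 1) (hy : y < 1) :
    memsPotential lam x * (y - x) ≤ lam / (1 - y) ^ 2 - lam / (1 - x) ^ 2 := by
  have hx' : 0 < 1 - x := sub_pos.2 hx
  have hy' : 0 < 1 - y := sub_pos.2 hy
  have hdiff : lam / (1 - y) ^ 2 - lam / (1 - x) ^ 2 - memsPotential lam x * (y - x)
      = lam * ((x - y) ^ 2 * ((1 - x) + 2 * (1 - y)) / ((1 - x) ^ 3 * (1 - y) ^ 2)) := by
    unfold memsPotential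
    field_simp
    ring
  have hrem : 0 ≤ lam * ((x - y) ^ 2 * ((1 - x) + 2 * (1 - y)) / ((1 - x) ^ 3 * (1 - y) ^ 2)) := by
    positivity
  linarith

/-- A radial solution of `(P)_lam` in the unit ball of `ℝ^(m+1)` which stays below `1`. -/
structure IsRadialMEMS (m : ℕ) (lam : ℝ) (u : RadialProfile) : Prop
    extends IsRadialSolution m 1 u fun r => lam / (1 - u.val r) ^ 2 where
  lt_one : ∀ r ∈ Icc 0 1, u.val r < 1
  val_one : u.val 1 = 0
  flux_one : u.flux 1 = 0

namespace IsRadialMEMS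

variable {m : ℕ} {lam : ℝ} {u : RadialProfile}

theorem memsPotential_pos (hu : IsRadialMEMS m lam u) (hlam : 0 < lam) :
    ∀ r ∈ Icc 0 1, 0 < memsPotential lam (u.val r) := fun r hr =>
  _root_.memsPotential_pos hlam (hu.lt_one r hr)

theorem continuousOn_memsPotential (hu : IsRadialMEMS m lam u) :
    ContinuousOn (fun r => memsPotential lam (u.val r)) (Icc 0 1) :=
  continuousOn_const.div ((continuousOn_const.sub hu.continuousOn_val).pow 3)
    fun r hr => pow_ne_zero 3 (sub_pos.2 (hu.lt_one r hr)).ne'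

theorem val_le_of_supersolution (hu : IsRadialMEMS m lam u) (hlam : 0 < lam) {z : RadialProfile}
    {fz : ℝ → ℝ} (hz : IsStrictSupersolution m 1 (fun r => memsPotential lam (u.val r)) z fz)
    {S : ℝ} (hS : S ∈ Ioc 0 1) {v : RadialProfile} {fv : ℝ → ℝ} (hv : IsRadialSolution m S v fv)
    (hv_lt : ∀ r ∈ Ioo 0 S, v.val r < 1) (hfv : ∀ r ∈ Ioo 0 S, lam / (1 - v.val r) ^ 2 ≤ fv r)
    (hval : u.val S ≤ v.val S) (hflux : v.flux S ≤ u.flux S) :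
    ∀ r ∈ Icc 0 S, u.val r ≤ v.val r := by
  have hsub : Icc 0 S ⊆ Icc 0 1 := Icc_subset_Icc_right hS.2
  have hV := hu.memsPotential_pos hlam
  have hzS : IsStrictSupersolution m S (fun r => memsPotential lam (u.val r)) z fz := by
    rcases hS.2.lt_or_eq with hlt | rfl
    · exact hz.restrict (fun r hr => (hV r hr).le) ⟨hS.1, hlt⟩
    · exact hz
  have hdiff := (hu.toIsRadialSolution.restrict hS.2).sub hv
  intro r hr
  refine sub_nonpos.1 (hzS.val_nonpos hS.1 (hu.continuousOn_memsPotential.mono hsub)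
    (fun s hs => hV s (hsub hs)) hdiff (fun s hs => ?_) (sub_nonpos.2 hval)
    (sub_nonneg.2 hflux) r hr)
  have hconvex := memsPotential_mul_sub_le hlam.le
    (hu.lt_one s (hsub (Ioo_subset_Icc_self hs))) (hv_lt s hs)
  have hfv_s := hfv s hs
  simp only [Pi.sub_apply, RadialProfile.val_sub]
  linarith

end IsRadialMEMS

/-- The constant function `c` as a radial profile. -/
def constProfile (c : ℝ) : RadialProfile := ⟨fun _ => c, 0, 0, 0⟩

theorem isRadialSolution_constProfile (m : ℕ) (R c : ℝ) :
    IsRadialSolution m R (constProfile c) 0 where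
  hasDerivAt_val r _ := by simpa [constProfile] using hasDerivAt_const r c
  hasDerivAt_flux r _ := by simp [constProfile]
  hasDerivAt_lap r _ := by simp [constProfile]
  hasDerivAt_lapFlux r _ := by simp [constProfile]
  continuousOn_val := continuousOn_const
  continuousOn_flux := continuousOn_const
  continuousOn_lapFlux := continuousOn_const
  flux_zero := rfl
  lapFlux_zero := rfl

/-- The function `r ^ p` as a radial profile in dimension `m + 1`. -/
noncomputable def rpowProfile (m : ℕ) (p : ℝ) : RadialProfile where
  val r := r ^ p
  flux r := p * r ^ (m + p - 1)
  lap r := p * (m + p - 1) * r ^ (p - 2)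
  lapFlux r := p * (m + p - 1) * (p - 2) * r ^ (m + p - 3)

theorem hasDerivAt_const_mul_rpow (c p : ℝ) {r : ℝ} (hr : 0 < r) :
    HasDerivAt (fun x : ℝ => c * x ^ p) (c * (p * r ^ (p - 1))) r :=
  (Real.hasDerivAt_rpow_const (Or.inl hr.ne')).const_mul c

theorem rpow_natCast_add (m : ℕ) (q : ℝ) {r : ℝ} (hr : 0 < r) :
    r ^ (m + q : ℝ) = r ^ m * r ^ q := by
  rw [Real.rpow_add hr, Real.rpow_natCast]

theorem isRadialSolution_rpowProfile {m : ℕ} (R : ℝ) {p : ℝ} (hp : 0 < p) (hmp : 3 < m + p) :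
    IsRadialSolution m R (rpowProfile m p)
      fun r => p * (m + p - 1) * (p - 2) * (m + p - 3) * r ^ (p - 4) where
  hasDerivAt_val r hr :=
    (Real.hasDerivAt_rpow_const (Or.inl hr.1.ne')).congr_deriv <| by
      simp only [rpowProfile]
      rw [add_sub_assoc, rpow_natCast_add m _ hr.1,
        mul_left_comm, mul_div_cancel_left₀ _ (pow_ne_zero m hr.1.ne')]
  hasDerivAt_flux r hr :=
    (hasDerivAt_const_mul_rpow p (m + p - 1) hr.1).congr_deriv <| by
      rw [show (m + p - 1 - 1 : ℝ) = m + (p - 2) by ring, rpow_natCast_add m _ hr.1]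
      simp only [rpowProfile]
      ring
  hasDerivAt_lap r hr :=
    (hasDerivAt_const_mul_rpow (p * (m + p - 1)) (p - 2) hr.1).congr_deriv <| by
      simp only [rpowProfile]
      rw [show (m + p - 3 : ℝ) = m + (p - 2 - 1) by ring, rpow_natCast_add m _ hr.1,
        mul_left_comm (_ * (p - 2)), mul_div_cancel_left₀ _ (pow_ne_zero m hr.1.ne')]
      ring
  hasDerivAt_lapFlux r hr :=
    (hasDerivAt_const_mul_rpow (p * (m + p - 1) * (p - 2)) (m + p - 3) hr.1).congr_deriv <| by
      rw [show (m + p - 3 - 1 : ℝ) = m + (p - 4) by ring, rpow_natCast_add m _ hr.1]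
      ring
  continuousOn_val := (Real.continuous_rpow_const hp.le).continuousOn
  continuousOn_flux :=
    (continuous_const.mul (Real.continuous_rpow_const (by linarith))).continuousOn
  continuousOn_lapFlux :=
    (continuous_const.mul (Real.continuous_rpow_const (by linarith))).continuousOn
  flux_zero := by simp [rpowProfile, Real.zero_rpow (by linarith : m + p - 1 ≠ 0)]
  lapFlux_zero := by simp [rpowProfile, Real.zero_rpow (by linarith : m + p - 3 ≠ 0)]

/-- The barrier `t (1 - C r ^ (4/3)) + (1 - t) q(r)`, where `q = 1 - b - a r ^ 2` is the parabola
tangent to `1 - C r ^ (4/3)` at `r = S`. -/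
noncomputable def barrierProfile (m : ℕ) (t C S : ℝ) : RadialProfile :=
  constProfile (1 - (1 - t) * (C * S ^ (4 / 3 : ℝ) / 3)) - (t * C) • rpowProfile m (4 / 3)
    - ((1 - t) * (2 / 3 * (C * S ^ (-(2 / 3) : ℝ)))) • rpowProfile m 2

section Barrier

variable {m : ℕ} {t C S r : ℝ}

theorem lamBar_succ (m : ℕ) : lamBar (m + 1) = 8 / 9 * (m + 1 / 3) * (m - 5 / 3) := by
  unfold lamBar
  push_cast
  ring

theorem lamBar_succ_pos (hm : 2 ≤ m) : 0 < lamBar (m + 1) := by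
  have hm' : (2 : ℝ) ≤ m := by exact_mod_cast hm
  rw [lamBar_succ]
  exact mul_pos (by positivity) (by linarith)

theorem isRadialSolution_barrierProfile (hm : 2 ≤ m) (R t C S : ℝ) :
    IsRadialSolution m R (barrierProfile m t C S)
      fun r => t * C * lamBar (m + 1) * r ^ (-(8 / 3) : ℝ) := by
  have hm' : (2 : ℝ) ≤ m := by exact_mod_cast hm
  refine (((isRadialSolution_constProfile m R _).sub
    ((isRadialSolution_rpowProfile R (p := 4 / 3) (by norm_num) (by linarith)).smul _)).sub
    ((isRadialSolution_rpowProfile R (p := 2) two_pos (by linarith)).smul _)).congr fun r _ => ?_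
  simp only [Pi.sub_apply, Pi.smul_apply, Pi.zero_apply, smul_eq_mul, lamBar_succ]
  norm_num
  ring

theorem barrierProfile_val_zero (m : ℕ) (t C S : ℝ) :
    (barrierProfile m t C S).val 0 = 1 - (1 - t) * (C * S ^ (4 / 3 : ℝ) / 3) := by
  simp [barrierProfile, constProfile, rpowProfile]

theorem barrierProfile_val_self (hS : 0 < S) :
    (barrierProfile m t C S).val S = 1 - C * S ^ (4 / 3 : ℝ) := by
  have hpow : S ^ (-(2 / 3) : ℝ) * S ^ (2 : ℝ) = S ^ (4 / 3 : ℝ) := by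
    rw [← Real.rpow_add hS]
    norm_num
  simp only [barrierProfile, constProfile, rpowProfile, RadialProfile.val_sub,
    RadialProfile.val_smul]
  linear_combination (-(1 - t) * (2 / 3) * C) * hpow

theorem barrierProfile_flux_self (hS : 0 < S) :
    (barrierProfile m t C S).flux S = -(4 / 3) * C * (S ^ m * S ^ (1 / 3 : ℝ)) := by
  have hpow : S ^ (-(2 / 3) : ℝ) * S ^ (m + 2 - 1 : ℝ) = S ^ m * S ^ (1 / 3 : ℝ) := by
    rw [← rpow_natCast_add m _ hS, ← Real.rpow_add hS]
    ring_nf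
  have hpow' : S ^ (m + 4 / 3 - 1 : ℝ) = S ^ m * S ^ (1 / 3 : ℝ) := by
    rw [← rpow_natCast_add m _ hS]
    ring_nf
  simp only [barrierProfile, constProfile, rpowProfile, RadialProfile.flux_sub,
    RadialProfile.flux_smul, Pi.zero_apply]
  linear_combination (-(1 - t) * (4 / 3) * C) * hpow - t * C * (4 / 3) * hpow'

theorem rpow_four_thirds_le (hS : 0 < S) (hr : 0 ≤ r) :
    r ^ (4 / 3 : ℝ) ≤ 1 / 3 * S ^ (4 / 3 : ℝ) + 2 / 3 * (S ^ (-(2 / 3) : ℝ) * r ^ (2 : ℝ)) := by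
  refine le_of_eq_of_le ?_ (Real.geom_mean_le_arith_mean2_weighted (by norm_num) (by norm_num)
    (Real.rpow_nonneg hS.le _) (mul_nonneg (Real.rpow_nonneg hS.le _) (Real.rpow_nonneg hr _))
    (by norm_num))
  rw [Real.mul_rpow (Real.rpow_nonneg hS.le _) (Real.rpow_nonneg hr _), ← Real.rpow_mul hS.le,
    ← Real.rpow_mul hS.le, ← Real.rpow_mul hr, ← mul_assoc, ← Real.rpow_add hS]
  norm_num

theorem mul_rpow_le_one_sub_barrierProfile (ht : t ≤ 1) (hC : 0 ≤ C) (hS : 0 < S) (hr : 0 ≤ r) :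
    C * r ^ (4 / 3 : ℝ) ≤ 1 - (barrierProfile m t C S).val r := by
  have hle := mul_le_mul_of_nonneg_left (rpow_four_thirds_le hS hr)
    (mul_nonneg (sub_nonneg.2 ht) hC)
  simp only [barrierProfile, constProfile, rpowProfile, RadialProfile.val_sub,
    RadialProfile.val_smul]
  linarith

theorem rpow_four_thirds_sq (hr : 0 ≤ r) : (r ^ (4 / 3 : ℝ)) ^ 2 = r ^ (8 / 3 : ℝ) := by
  rw [← Real.rpow_natCast, ← Real.rpow_mul hr]
  norm_num

theorem div_sq_barrierProfile_le (ht : t ≤ 1) (hC : 0 < C) (hS : 0 < S) (hr : 0 < r) {lam : ℝ}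
    (hlam : 0 ≤ lam) (hlam_eq : lam = t * (C ^ 3 * lamBar (m + 1))) :
    lam / (1 - (barrierProfile m t C S).val r) ^ 2
      ≤ t * C * lamBar (m + 1) * r ^ (-(8 / 3) : ℝ) := by
  have : 0 < C * r ^ (4 / 3 : ℝ) := by positivity
  calc lam / (1 - (barrierProfile m t C S).val r) ^ 2 ≤ lam / (C * r ^ (4 / 3 : ℝ)) ^ 2 := by
        have hle := mul_rpow_le_one_sub_barrierProfile (m := m) ht hC.le hS hr.le
        gcongr
    _ = t * C * lamBar (m + 1) * r ^ (-(8 / 3) : ℝ) := by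
        rw [mul_pow, rpow_four_thirds_sq hr.le, Real.rpow_neg hr.le, hlam_eq]
        field_simp

end Barrier

theorem IsRadialMEMS.mul_rpow_le_one_sub_val_zero {m : ℕ} (hm : 2 ≤ m) {lam C S : ℝ}
    {u z : RadialProfile} {fz : ℝ → ℝ} (hu : IsRadialMEMS m lam u) (hlam : 0 < lam)
    (hz : IsStrictSupersolution m 1 (fun r => memsPotential lam (u.val r)) z fz) (hC : 0 < C)
    (hlamC : lam ≤ C ^ 3 * lamBar (m + 1)) (hS : S ∈ Ioc 0 1)
    (hval : u.val S = 1 - C * S ^ (4 / 3 : ℝ))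
    (hflux : -(4 / 3) * C * (S ^ m * S ^ (1 / 3 : ℝ)) ≤ u.flux S) :
    (1 - lam / (C ^ 3 * lamBar (m + 1))) * (C * S ^ (4 / 3 : ℝ) / 3) ≤ 1 - u.val 0 := by
  have hK : 0 < C ^ 3 * lamBar (m + 1) := mul_pos (pow_pos hC 3) (lamBar_succ_pos hm)
  set t := lam / (C ^ 3 * lamBar (m + 1))
  have ht : t ≤ 1 := (div_le_one hK).2 hlamC
  have hle := hu.val_le_of_supersolution hlam hz hS
    (isRadialSolution_barrierProfile hm S t C S)
    (fun r hr => sub_pos.1 <| (mul_pos hC (Real.rpow_pos_of_pos hr.1 _)).trans_le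
      (mul_rpow_le_one_sub_barrierProfile ht hC.le hS.1 hr.1.le))
    (fun r hr => div_sq_barrierProfile_le ht hC hS.1 hr.1 hlam.le (div_mul_cancel₀ lam hK.ne').symm)
    (hval.trans (barrierProfile_val_self hS.1).symm).le
    ((barrierProfile_flux_self hS.1).trans_le hflux) 0 (left_mem_Icc.2 hS.1.le)
  rw [barrierProfile_val_zero] at hle
  linarith

theorem exists_last_eq {f g : ℝ → ℝ} {a b : ℝ} (hab : a ≤ b) (hf : ContinuousOn f (Icc a b))
    (hg : ContinuousOn g (Icc a b)) (ha : f a < g a) (hb : g b ≤ f b) :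
    ∃ c ∈ Ioc a b, f c = g c ∧ ∀ x ∈ Ioc c b, g x < f x := by
  have hcompact : IsCompact {x ∈ Icc a b | f x ≤ g x} :=
    isCompact_Icc.of_isClosed_subset (isClosed_Icc.isClosed_le hf hg) fun _ hx => hx.1
  obtain ⟨c, ⟨hc, hfc⟩, hmax⟩ := hcompact.exists_isGreatest ⟨a, left_mem_Icc.2 hab, ha.le⟩
  have hlt : ∀ x ∈ Ioc c b, g x < f x := fun x hx => not_le.1 fun hle =>
    (hmax ⟨⟨hc.1.trans hx.1.le, hx.2⟩, hle⟩).not_gt hx.1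
  have heq : f c = g c := by
    have hsub : Icc c b ⊆ Icc a b := Icc_subset_Icc_left hc.1
    obtain ⟨x, hx, hx0⟩ := intermediate_value_Icc hc.2 ((hf.sub hg).mono hsub)
      (show (0 : ℝ) ∈ Icc (f c - g c) (f b - g b) from ⟨sub_nonpos.2 hfc, sub_nonneg.2 hb⟩)
    have hfx : f x = g x := sub_eq_zero.1 hx0
    obtain rfl : x = c := le_antisymm (hmax ⟨hsub hx, hfx.le⟩) hx.1
    exact hfx
  refine ⟨c, ⟨hc.1.lt_of_ne fun hac => ?_, hc.2⟩, heq, hlt⟩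
  subst hac
  exact ha.ne heq

theorem hasDerivAt_le_of_lt_right {f g : ℝ → ℝ} {f' g' a b : ℝ} (hf : HasDerivAt f f' a)
    (hg : HasDerivAt g g' a) (hab : a < b) (heq : f a = g a) (hlt : ∀ x ∈ Ioc a b, g x < f x) :
    g' ≤ f' := by
  have hslope := (hf.sub hg).tendsto_slope.mono_left (nhdsGT_le_nhdsNE a)
  refine sub_nonneg.1 (ge_of_tendsto hslope ?_)
  filter_upwards [Ioc_mem_nhdsGT hab] with x hx
  rw [slope_def_field]
  refine div_nonneg ?_ (sub_nonneg.2 hx.1.le)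
  simp only [Pi.sub_apply, heq, sub_self, sub_zero]
  exact sub_nonneg.2 (hlt x hx).le

theorem IsRadialMEMS.flux_ge_of_touching {m : ℕ} {lam C S : ℝ} {u : RadialProfile}
    (hu : IsRadialMEMS m lam u) (hC : 0 ≤ C) (hS : S ∈ Ioc 0 1)
    (hval : u.val S = 1 - C * S ^ (4 / 3 : ℝ))
    (hlt : ∀ r ∈ Ioc S 1, 1 - C * r ^ (4 / 3 : ℝ) < u.val r) :
    -(4 / 3) * C * (S ^ m * S ^ (1 / 3 : ℝ)) ≤ u.flux S := by
  rcases hS.2.lt_or_eq with hS1 | rfl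
  · have hderiv := ((Real.hasDerivAt_rpow_const (p := 4 / 3) (Or.inl hS.1.ne')).const_mul
      C).const_sub 1
    have hle := hasDerivAt_le_of_lt_right (hu.hasDerivAt_val S ⟨hS.1, hS1⟩) hderiv hS1 hval hlt
    rw [le_div_iff₀ (pow_pos hS.1 m)] at hle
    refine le_of_eq_of_le ?_ hle
    norm_num
    ring
  · rw [hu.flux_one, Real.one_rpow, one_pow, mul_one]
    linarith

/-- A lower bound for the distance to `1` of the minimal solutions, independent of `lam`. -/
noncomputable def minimalGap : ℝ := 1 / 51 * (hardyRadius (-2) ^ (4 / 3 : ℝ) / 3)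

theorem minimalGap_pos : 0 < minimalGap :=
  mul_pos (by norm_num) (div_pos (Real.rpow_pos_of_pos (hardyRadius_pos _) _) three_pos)

theorem hardy_const_lt {m : ℕ} (hm : 2 ≤ m) (hm' : m ≤ 7) :
    sqrtRellich m ^ 2 + (sqrtRellich m + 1 / 4) ^ 2 / 2 + 1 / 2
      < 3 / 2 * (100 / 51 * lamBar (m + 1)) := by
  unfold sqrtRellich
  rw [lamBar_succ]
  interval_cases m <;> norm_num

theorem rpow_four_thirds_cube {r : ℝ} (hr : 0 ≤ r) : (r ^ (4 / 3 : ℝ)) ^ 3 = r ^ 4 := by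
  rw [← Real.rpow_natCast, ← Real.rpow_mul hr, ← Real.rpow_natCast]
  norm_num

/- If `u > 1 - C r ^ (4/3)` with `C ^ 3 λ̄_N = (51/50) lam`, the potential exceeds
`(100/51) λ̄_N / r ^ 4`, which is too much for stability. -/
theorem IsRadialMEMS.hardyRadius_le_of_touching {m : ℕ} (hm : 2 ≤ m) (hm' : m ≤ 7)
    {lam C S : ℝ} {u z : RadialProfile} {fz : ℝ → ℝ} (hu : IsRadialMEMS m lam u) (hlam : 0 < lam)
    (hz : IsStrictSupersolution m 1 (fun r => memsPotential lam (u.val r)) z fz) (hC : 0 < C)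
    (hlamC : C ^ 3 * lamBar (m + 1) = 51 / 50 * lam)
    (hlt : ∀ r ∈ Ioc S 1, 1 - C * r ^ (4 / 3 : ℝ) < u.val r) : hardyRadius (-2) ≤ S := by
  by_contra! hS
  have hβ : hardyRadius (-2 + 1) < 1 := by
    rw [← hardyRadius_zero]
    exact strictMono_hardyRadius (by norm_num)
  refine (hardy_const_lt hm hm').not_ge (hz.potential_const_le hu.continuousOn_memsPotential
    (fun r hr => (hu.memsPotential_pos hlam r hr).le) hβ fun r hr => ?_)
  have hr0 : 0 < r := (hardyRadius_pos _).trans_le hr.1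
  have hr1 : r ≤ 1 := hr.2.trans hβ.le
  have hgap : 0 < 1 - u.val r := sub_pos.2 (hu.lt_one r ⟨hr0.le, hr1⟩)
  have hle : 1 - u.val r ≤ C * r ^ (4 / 3 : ℝ) := by
    linarith [hlt r ⟨hS.trans_le hr.1, hr1⟩]
  calc 100 / 51 * lamBar (m + 1) / r ^ 4 = 2 * lam / (C * r ^ (4 / 3 : ℝ)) ^ 3 := by
        rw [mul_pow, rpow_four_thirds_cube hr0.le,
          show lam = 50 / 51 * (C ^ 3 * lamBar (m + 1)) by linarith]
        field_simp
        ring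
    _ ≤ memsPotential lam (u.val r) := by
        unfold memsPotential
        gcongr

/- The last point `S` where `u` touches `1 - C r ^ (4/3)` is `1` if `C ≤ 1`; for larger `C` the
previous lemma applies. -/
theorem IsRadialMEMS.exists_touching {m : ℕ} (hm : 2 ≤ m) (hm' : m ≤ 7) {lam C : ℝ}
    {u z : RadialProfile} {fz : ℝ → ℝ} (hu : IsRadialMEMS m lam u) (hlam : 0 < lam)
    (hz : IsStrictSupersolution m 1 (fun r => memsPotential lam (u.val r)) z fz) (hC : 0 < C)
    (hlamC : C ^ 3 * lamBar (m + 1) = 51 / 50 * lam) :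
    ∃ S ∈ Ioc 0 1, hardyRadius (-2) ≤ S ∧ u.val S = 1 - max 1 C * S ^ (4 / 3 : ℝ) ∧
      -(4 / 3) * max 1 C * (S ^ m * S ^ (1 / 3 : ℝ)) ≤ u.flux S := by
  obtain ⟨S, hS, hval, hlt⟩ := exists_last_eq (f := u.val)
    (g := fun r => 1 - max 1 C * r ^ (4 / 3 : ℝ)) zero_le_one hu.continuousOn_val
    (by fun_prop (disch := norm_num)) (by simpa using hu.lt_one 0 (by simp))
    (by simp [hu.val_one])
  refine ⟨S, hS, ?_, hval, hu.flux_ge_of_touching (hC.le.trans (le_max_right _ _)) hS hval hlt⟩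
  rcases le_total 1 C with hC1 | hC1
  · rw [max_eq_right hC1] at hlt
    exact hu.hardyRadius_le_of_touching hm hm' hlam hz hC hlamC hlt
  · have hS1 : ¬ S < 1 := fun hS1 => by
      simpa [hu.val_one, max_eq_left hC1] using hlt 1 ⟨hS1, le_rfl⟩
    refine le_trans ?_ (not_lt.1 hS1)
    rw [← hardyRadius_zero]
    exact (strictMono_hardyRadius (by norm_num)).le

theorem IsRadialMEMS.minimalGap_le {m : ℕ} (hm : 2 ≤ m) (hm' : m ≤ 7) {lam : ℝ}
    {u z : RadialProfile} {fz : ℝ → ℝ} (hu : IsRadialMEMS m lam u) (hlam : 0 < lam)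
    (hz : IsStrictSupersolution m 1 (fun r => memsPotential lam (u.val r)) z fz) :
    minimalGap ≤ 1 - u.val 0 := by
  have hK := lamBar_succ_pos hm
  obtain ⟨C, hC, hlamC⟩ : ∃ C : ℝ, 0 < C ∧ C ^ 3 * lamBar (m + 1) = 51 / 50 * lam := by
    refine ⟨(51 / 50 * lam / lamBar (m + 1)) ^ (1 / 3 : ℝ), by positivity, ?_⟩
    rw [← Real.rpow_natCast, ← Real.rpow_mul (by positivity)]
    norm_num
    field_simp
  obtain ⟨S, hS, hS_ge, hval, hflux⟩ := hu.exists_touching hm hm' hlam hz hC hlamC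
  have hlam_le : 51 / 50 * lam ≤ max 1 C ^ 3 * lamBar (m + 1) := by
    rw [← hlamC]
    gcongr
    exact le_max_right _ _
  have hratio : lam / (max 1 C ^ 3 * lamBar (m + 1)) ≤ 50 / 51 := by
    rw [div_le_iff₀ (by positivity)]
    linarith
  have hpow : hardyRadius (-2) ^ (4 / 3 : ℝ) ≤ max 1 C * S ^ (4 / 3 : ℝ) :=
    (Real.rpow_le_rpow (hardyRadius_pos _).le hS_ge (by norm_num)).trans
      (le_mul_of_one_le_left (Real.rpow_nonneg hS.1.le _) (le_max_left _ _))
  calc minimalGap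
      ≤ (1 - lam / (max 1 C ^ 3 * lamBar (m + 1))) * (max 1 C * S ^ (4 / 3 : ℝ) / 3) :=
        mul_le_mul (by linarith) (by linarith)
          (div_nonneg (Real.rpow_nonneg (hardyRadius_pos _).le _) zero_le_three) (by linarith)
    _ ≤ 1 - u.val 0 :=
        hu.mul_rpow_le_one_sub_val_zero hm hlam hz (by positivity) (by linarith) hS hval hflux

/-! ### Existence for small `lam` -/

section ClampedVal

variable {m : ℕ} {R c : ℝ} {G H : ℝ → ℝ}

theorem clampedVal_le_add (hR : 0 ≤ R) (hG : Continuous G) (hH : Continuous H)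
    (hc : 0 ≤ c) (hGH : ∀ s ∈ Icc 0 (R ^ 2), G s ≤ H s + c) {s : ℝ} (hs : s ∈ Icc 0 (R ^ 2)) :
    clampedVal m R G s ≤ clampedVal m R H s + c / (8 * (m + 1) * (m + 3)) * R ^ 4 := by
  have hp := isClampedSolution_clampedProfile m R hG
  have hq := isClampedSolution_clampedProfile m R hH
  have hplate := isClampedSolution_plateProfile m R
  have hnonneg := ((hq.add (hplate.smul (c / (8 * (m + 1) * (m + 3))))).sub
    hp.toIsRadialSolution).val_nonneg (fun r hr => ?_)
    (by simp [hp.flux_right, hq.flux_right, hplate.flux_right])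
    (by simp [hp.val_right, hq.val_right, hplate.val_right]) √s
    ⟨Real.sqrt_nonneg s, (Real.sqrt_le_left hR).2 hs.2⟩
  · simp only [RadialProfile.val_sub, RadialProfile.val_add, RadialProfile.val_smul,
      clampedProfile, plateProfile, Real.sq_sqrt hs.1] at hnonneg
    have hsq : (R ^ 2 - s) ^ 2 ≤ R ^ 4 := by
      rw [show R ^ 4 = (R ^ 2) ^ 2 by ring]
      exact pow_le_pow_left₀ (sub_nonneg.2 hs.2) (sub_le_self _ hs.1) 2
    have := mul_le_mul_of_nonneg_left hsq
      (show 0 ≤ c / (8 * (m + 1) * (m + 3)) by positivity)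
    linarith
  · have hle := hGH (r ^ 2) ⟨sq_nonneg r, pow_le_pow_left₀ hr.1.le hr.2.le 2⟩
    have hsource : c / (8 * (m + 1) * (m + 3)) * (8 * (m + 1) * (m + 3)) = c :=
      div_mul_cancel₀ c (by positivity)
    simp only [Pi.sub_apply, Pi.add_apply, Pi.smul_apply, smul_eq_mul, hsource]
    linarith

theorem abs_clampedVal_sub_le (hR : 0 ≤ R) (hG : Continuous G) (hH : Continuous H)
    (hc : 0 ≤ c) (hGH : ∀ s ∈ Icc 0 (R ^ 2), |G s - H s| ≤ c) {s : ℝ} (hs : s ∈ Icc 0 (R ^ 2)) :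
    |clampedVal m R G s - clampedVal m R H s| ≤ c / (8 * (m + 1) * (m + 3)) * R ^ 4 := by
  have hle := clampedVal_le_add (m := m) hR hG hH hc
    (fun σ hσ => by linarith [(abs_le.1 (hGH σ hσ)).2]) hs
  have hge := clampedVal_le_add (m := m) hR hH hG hc
    (fun σ hσ => by linarith [(abs_le.1 (hGH σ hσ)).1]) hs
  exact abs_sub_le_iff.2 ⟨by linarith, by linarith⟩

theorem clampedVal_congr (hR : 0 ≤ R) (hG : Continuous G) (hH : Continuous H)
    (hGH : EqOn G H (Icc 0 (R ^ 2))) :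
    EqOn (clampedVal m R G) (clampedVal m R H) (Icc 0 (R ^ 2)) := fun s hs => by
  simpa [sub_eq_zero] using abs_clampedVal_sub_le (m := m) hR hG hH le_rfl
    (fun σ hσ => by simp [hGH hσ]) hs

theorem clampedVal_zero (m : ℕ) (R s : ℝ) : clampedVal m R 0 s = 0 := by
  simp [clampedVal, clampedLap, invLap, radialMean]

theorem abs_clampedVal_le (hR : 0 ≤ R) (hG : Continuous G) (hc : 0 ≤ c)
    (hGc : ∀ s ∈ Icc 0 (R ^ 2), |G s| ≤ c) {s : ℝ} (hs : s ∈ Icc 0 (R ^ 2)) :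
    |clampedVal m R G s| ≤ c / (8 * (m + 1) * (m + 3)) * R ^ 4 := by
  simpa [clampedVal_zero] using
    abs_clampedVal_sub_le (m := m) hR hG continuous_zero hc (by simpa using hGc) hs

theorem lap_comp_norm_sq_of_hasDerivAt {F : ℝ → ℝ} (hG : ContDiff ℝ 1 G)
    (hF : ∀ s, HasDerivAt F (radialMean m G s / 2) s) (x : EuclideanSpace ℝ (Fin (m + 1))) :
    lap (fun y => F (‖y‖ ^ 2)) x = G (‖x‖ ^ 2) := by
  rw [lap_comp_norm_sq (.of_forall hF) ((hasDerivAt_radialMean m hG _).div_const 2),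
    ← radialMean_eq m hG (‖x‖ ^ 2)]
  push_cast
  ring

theorem hasDerivAt_clampedVal (m : ℕ) (R : ℝ) (hG : Continuous G) (s : ℝ) :
    HasDerivAt (clampedVal m R G) (radialMean m (clampedLap m R G) s / 2) s :=
  (hasDerivAt_invLap m (contDiff_clampedLap 0 m R (contDiff_zero.2 hG)).continuous s).sub_const _

theorem biharm_clampedVal_comp_norm_sq (R : ℝ) (hG : ContDiff ℝ 1 G)
    (x : EuclideanSpace ℝ (Fin (m + 1))) :
    biharm (fun y => clampedVal m R G (‖y‖ ^ 2)) x = G (‖x‖ ^ 2) := by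
  have hL : ContDiff ℝ 1 (clampedLap m R G) := (contDiff_clampedLap 1 m R hG).of_le (by simp)
  rw [biharm, funext (lap_comp_norm_sq_of_hasDerivAt hL (hasDerivAt_clampedVal m R hG.continuous))]
  exact lap_comp_norm_sq_of_hasDerivAt hG
    (fun s => (hasDerivAt_invLap m hG.continuous s).sub_const _) x

end ClampedVal

theorem exists_continuous_eqOn_clampedVal {m : ℕ} {K : NNReal} {φ : ℝ → ℝ}
    (hφ : LipschitzWith K φ) (hK : K < 8 * (m + 1) * (m + 3)) :
    ∃ w : ℝ → ℝ, Continuous w ∧ EqOn (clampedVal m 1 fun s => φ (w s)) w (Icc 0 1) := by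
  have hcont (w : C(Icc (0 : ℝ) 1, ℝ)) :
      Continuous fun s => φ (IccExtend zero_le_one w s) :=
    hφ.continuous.comp w.continuous.Icc_extend'
  let T : C(Icc (0 : ℝ) 1, ℝ) → C(Icc (0 : ℝ) 1, ℝ) := fun w =>
    ⟨fun s => clampedVal m 1 (fun s => φ (IccExtend zero_le_one w s)) s,
      (contDiff_clampedVal 0 m 1 (contDiff_zero.2 (hcont w))).continuous.comp
        continuous_subtype_val⟩
  have hT : ContractingWith (K / (8 * (m + 1) * (m + 3))) T := by
    refine ⟨(div_lt_one (by positivity)).2 hK, LipschitzWith.of_dist_le_mul fun v w =>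
      (ContinuousMap.dist_le (by positivity)).2 fun s => ?_⟩
    have hsource : ∀ σ ∈ Icc (0 : ℝ) (1 ^ 2),
        |φ (IccExtend zero_le_one v σ) - φ (IccExtend zero_le_one w σ)| ≤ K * dist v w :=
      fun σ _ => (hφ.dist_le_mul _ _).trans <|
        mul_le_mul_of_nonneg_left (ContinuousMap.dist_apply_le_dist _) K.2
    have hle := abs_clampedVal_sub_le (m := m) zero_le_one (hcont v) (hcont w) (by positivity)
      hsource (s := s) (by simp)
    rw [one_pow, mul_one] at hle
    refine hle.trans_eq ?_
    push_cast
    ring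
  have hfixed : T (ContractingWith.fixedPoint T hT) = _ := hT.fixedPoint_isFixedPt
  refine ⟨_, (ContractingWith.fixedPoint T hT).continuous.Icc_extend' (h := zero_le_one),
    fun s hs => ?_⟩
  rw [IccExtend_of_mem _ _ hs]
  exact DFunLike.congr_fun hfixed ⟨s, hs⟩

/- The fixed point of the previous lemma is only continuous; applying the solution operator two
more times gains the regularity. -/
theorem exists_contDiff_eqOn_clampedVal {m : ℕ} {K : NNReal} {φ : ℝ → ℝ} (hφ : ContDiff ℝ 2 φ)
    (hφK : LipschitzWith K φ) (hK : K < 8 * (m + 1) * (m + 3)) :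
    ∃ G : ℝ → ℝ, ContDiff ℝ 2 G ∧ EqOn G (fun s => φ (clampedVal m 1 G s)) (Icc 0 1) := by
  obtain ⟨w, hw, hfixed⟩ := exists_continuous_eqOn_clampedVal hφK hK
  have hφw : Continuous fun s => φ (w s) := hφ.continuous.comp hw
  have hG : ContDiff ℝ 2 fun s => φ (clampedVal m 1 (fun s => φ (w s)) s) :=
    hφ.comp (by simpa using contDiff_clampedVal 0 m 1 (contDiff_zero.2 hφw))
  have heq := clampedVal_congr (m := m) zero_le_one hG.continuous hφw
    (fun s hs => congrArg φ (hfixed (one_pow (M := ℝ) 2 ▸ hs)))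
  exact ⟨_, hG, fun s hs => by simp only [heq (show s ∈ Icc 0 (1 ^ 2) by simpa using hs)]⟩

theorem isClassicalSolution_clampedVal {m : ℕ} {lam : ℝ} (hlam : 0 < lam) {G : ℝ → ℝ}
    (hG : ContDiff ℝ 2 G)
    (hGlam : ∀ s ∈ Icc 0 1, G s = lam / (1 - clampedVal m 1 G s) ^ 2)
    (hlt : ∀ s ∈ Icc 0 1, clampedVal m 1 G s < 1) :
    IsClassicalSolution (m + 1) lam fun x => clampedVal m 1 G (‖x‖ ^ 2) where
  contDiffOn := by
    have hF : ContDiff ℝ 4 (clampedVal m 1 G) := by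
      simpa [two_add_two_eq_four] using contDiff_clampedVal 2 m 1 hG
    exact (hF.comp (contDiff_norm_sq ℝ)).contDiffOn
  pos x hx := by
    have hsource : ∀ r ∈ Ioo (0 : ℝ) 1, 0 < G (r ^ 2) := fun r hr => by
      have hmem : r ^ 2 ∈ Icc 0 1 := ⟨sq_nonneg r, pow_le_one₀ hr.1.le hr.2.le⟩
      rw [hGlam _ hmem]
      exact div_pos hlam (pow_pos (sub_pos.2 (hlt _ hmem)) 2)
    have hclamped := isClampedSolution_clampedProfile m 1 hG.continuous
    exact hclamped.val_pos hsource hclamped.flux_right.le hclamped.val_right.ge ‖x‖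
      ⟨norm_nonneg x, mem_ball_zero_iff.1 hx⟩
  lt_one x hx :=
    hlt _ ⟨sq_nonneg _, pow_le_one₀ (norm_nonneg x) (mem_ball_zero_iff.1 hx).le⟩
  eqn x hx := by
    rw [biharm_clampedVal_comp_norm_sq 1 (hG.of_le one_le_two)]
    exact hGlam _ ⟨sq_nonneg _, pow_le_one₀ (norm_nonneg x) (mem_ball_zero_iff.1 hx).le⟩
  bdry x hx := by simp [hx, clampedVal]
  bdry_deriv x hx := by
    have hunique : UniqueDiffWithinAt ℝ (closedBall (0 : EuclideanSpace ℝ (Fin (m + 1))) 1) x :=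
      uniqueDiffWithinAt_convex (convex_closedBall _ _) (by simp [interior_closedBall])
        (subset_closure (by simp [hx]))
    have hderiv : HasDerivAt (clampedVal m 1 G) 0 (‖x‖ ^ 2) := by
      have := hasDerivAt_clampedVal m 1 hG.continuous (1 ^ 2)
      rwa [radialMean_clampedLap_right m 1 hG.continuous, zero_div, ← congrArg (· ^ 2) hx] at this
    have hfderiv : HasFDerivAt (fun x => clampedVal m 1 G (‖x‖ ^ 2))
        (0 : EuclideanSpace ℝ (Fin (m + 1)) →L[ℝ] ℝ) x :=
      (HasDerivAt.comp_hasFDerivAt (h₂ := clampedVal m 1 G) x hderiv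
        (hasStrictFDerivAt_norm_sq x).hasFDerivAt).congr_fderiv (zero_smul ℝ _)
    rw [hfderiv.hasFDerivWithinAt.fderivWithin hunique, zero_apply]

theorem exists_contDiff_eq_inv_one_sub_sq :
    ∃ φ : ℝ → ℝ, ContDiff ℝ 2 φ ∧ HasCompactSupport φ ∧
      ∀ y, |y| ≤ 1 / 4 → φ y = 1 / (1 - y) ^ 2 := by
  obtain ⟨η, hηIn, hηOut⟩ : ∃ η : ContDiffBump (0 : ℝ), η.rIn = 1 / 4 ∧ η.rOut = 1 / 2 :=
    ⟨⟨1 / 4, 1 / 2, by norm_num, by norm_num⟩, rfl, rfl⟩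
  refine ⟨⇑η * fun y => 1 / (1 - y) ^ 2, contDiff_iff_contDiffAt.2 fun y => ?_,
    η.hasCompactSupport.mul_right, fun y hy => ?_⟩
  · by_cases hy : y ∈ closedBall (0 : ℝ) (1 / 2)
    · rw [mem_closedBall_zero_iff, Real.norm_eq_abs] at hy
      have hne : (1 - y) ^ 2 ≠ 0 := pow_ne_zero 2 (by linarith [(abs_le.1 hy).2])
      have hinv : ContDiffAt ℝ 2 (fun y : ℝ => 1 / (1 - y) ^ 2) y := by
        fun_prop (disch := exact hne)
      have hη : ContDiffAt ℝ 2 η y := η.contDiffAt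
      exact hη.mul hinv
    · refine (contDiffAt_const (c := (0 : ℝ))).congr_of_eventuallyEq ?_
      filter_upwards [isClosed_closedBall.isOpen_compl.mem_nhds hy] with z hz
      rw [Pi.mul_apply, η.zero_of_le_dist (hηOut.trans_le (not_le.1 (mem_closedBall.not.1 hz)).le),
        zero_mul]
  · rw [Pi.mul_apply, η.one_of_mem_closedBall (by simpa [hηIn] using hy), one_mul]

theorem solSet_succ_nonempty (m : ℕ) : (solSet (m + 1)).Nonempty := by
  obtain ⟨φ, hφ, hφc, hφ_eq⟩ := exists_contDiff_eq_inv_one_sub_sq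
  obtain ⟨K, hK⟩ := hφ.lipschitzWith_of_hasCompactSupport hφc two_ne_zero
  obtain ⟨M, hM⟩ := hφc.exists_bound_of_continuous hφ.continuous
  lift M to NNReal using (norm_nonneg _).trans (hM 0)
  obtain ⟨lam, hlam, hlamK, hlamM⟩ : ∃ lam : NNReal, 0 < (lam : ℝ) ∧ lam * K ≤ 1 ∧ lam * M ≤ 1 := by
    refine ⟨1 / (K + M + 1), by positivity, ?_, ?_⟩ <;>
      rw [one_div_mul_eq_div, div_le_one (by positivity)]
    · exact (le_add_right le_self_add)
    · exact (le_add_right le_add_self)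
  have hlarge : (4 : ℝ) ≤ 8 * (m + 1) * (m + 3) := by
    nlinarith [(Nat.cast_nonneg m : (0 : ℝ) ≤ m)]
  have hLip : LipschitzWith (lam * K) fun y => (lam : ℝ) * φ y := by
    simpa [Function.comp_def] using (lipschitzWith_smul (lam : ℝ)).comp hK
  obtain ⟨G, hG, hGφ⟩ := exists_contDiff_eqOn_clampedVal (m := m) (contDiff_const.mul hφ) hLip
    (hlamK.trans_lt (by rw [← NNReal.coe_lt_coe]; push_cast; linarith))
  have hbound : ∀ s ∈ Icc 0 1, |clampedVal m 1 G s| ≤ 1 / 4 := fun s hs => by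
    refine (abs_clampedVal_le zero_le_one hG.continuous zero_le_one (fun σ hσ => ?_)
      (by simpa using hs)).trans ?_
    · simp only [hGφ (one_pow (M := ℝ) 2 ▸ hσ), abs_mul, NNReal.abs_eq]
      exact (mul_le_mul_of_nonneg_left (hM _) lam.2).trans (mod_cast hlamM)
    · rw [one_pow, mul_one]
      exact one_div_le_one_div_of_le (by norm_num) hlarge
  refine ⟨lam, hlam, _, isClassicalSolution_clampedVal hlam hG (fun s hs => ?_)
    fun s hs => ?_⟩
  · simp only [hGφ hs, hφ_eq _ (hbound s hs), mul_one_div]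
  · linarith [(abs_le.1 (hbound s hs)).2]

/-! ### Boundedness of the set of voltages -/

theorem integrable_mul_of_hasCompactSupport {X : Type*} [TopologicalSpace X] [MeasurableSpace X]
    [OpensMeasurableSpace X] {μ : Measure X} [IsFiniteMeasureOnCompacts μ] {η g : X → ℝ}
    (hη : Continuous η) (hc : HasCompactSupport η) (hg : ∀ x ∈ tsupport η, ContinuousAt g x) :
    Integrable (fun x => η x * g x) μ :=
  (continuous_of_tsupport fun x hx =>
    hη.continuousAt.mul (hg x (tsupport_mul_subset_left hx))).integrable_of_hasCompactSupport
    hc.mul_right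

section IntegrationByParts

variable {N : ℕ} {φ g : EuclideanSpace ℝ (Fin N) → ℝ}

theorem integral_mul_fderiv_eq_neg (hφ : ContDiff ℝ 1 φ) (hc : HasCompactSupport φ)
    (hg : ∀ x ∈ tsupport φ, ContDiffAt ℝ 1 g x) (v : EuclideanSpace ℝ (Fin N)) :
    ∫ x, φ x * fderiv ℝ g x v = -∫ x, fderiv ℝ φ x v * g x := by
  have hφ' : Continuous fun x => fderiv ℝ φ x v :=
    (hφ.continuous_fderiv one_ne_zero).clm_apply continuous_const
  refine integral_mul_fderiv_eq_neg_fderiv_mul_of_integrable ?_ ?_ ?_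
    (fun x _ => hφ.differentiable one_ne_zero x)
    (fun x hx => (hg x hx).differentiableAt one_ne_zero)
  · exact integrable_mul_of_hasCompactSupport hφ' (hc.fderiv_apply (𝕜 := ℝ) v)
      fun x hx => (hg x (tsupport_fderiv_apply_subset ℝ v hx)).continuousAt
  · refine integrable_mul_of_hasCompactSupport hφ.continuous hc fun x hx => ?_
    exact ((hg x hx).fderiv_right (m := 0) (by norm_num)).continuousAt.clm_apply
      continuousAt_const
  · exact integrable_mul_of_hasCompactSupport hφ.continuous hc fun x hx => (hg x hx).continuousAt

theorem integral_mul_fderiv_fderiv (hφ : ContDiff ℝ 2 φ) (hc : HasCompactSupport φ)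
    (hg : ∀ x ∈ tsupport φ, ContDiffAt ℝ 2 g x) (v : EuclideanSpace ℝ (Fin N)) :
    ∫ x, φ x * fderiv ℝ (fun y => fderiv ℝ g y v) x v
      = ∫ x, fderiv ℝ (fun y => fderiv ℝ φ y v) x v * g x := by
  have hφ' : ContDiff ℝ 1 fun x => fderiv ℝ φ x v :=
    (hφ.fderiv_right le_rfl).clm_apply contDiff_const
  have hg' : ∀ x ∈ tsupport φ, ContDiffAt ℝ 1 (fun x => fderiv ℝ g x v) x := fun x hx =>
    ((hg x hx).fderiv_right le_rfl).clm_apply contDiffAt_const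
  rw [integral_mul_fderiv_eq_neg (hφ.of_le one_le_two) hc hg',
    integral_mul_fderiv_eq_neg hφ' (hc.fderiv_apply (𝕜 := ℝ) v) (fun x hx =>
      (hg x (tsupport_fderiv_apply_subset ℝ v hx)).of_le one_le_two), neg_neg]

theorem integral_mul_lap (hφ : ContDiff ℝ 2 φ) (hc : HasCompactSupport φ)
    (hg : ∀ x ∈ tsupport φ, ContDiffAt ℝ 2 g x) :
    ∫ x, φ x * lap g x = ∫ x, lap φ x * g x := by
  simp only [lap, Finset.mul_sum, Finset.sum_mul]
  rw [integral_finsetSum, integral_finsetSum]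
  · exact Finset.sum_congr rfl fun i _ => integral_mul_fderiv_fderiv hφ hc hg _
  · intro i _
    have hφ' : ContDiff ℝ 1 fun x => fderiv ℝ φ x (EuclideanSpace.single i 1) :=
      (hφ.fderiv_right le_rfl).clm_apply contDiff_const
    exact integrable_mul_of_hasCompactSupport
      ((hφ'.continuous_fderiv one_ne_zero).clm_apply continuous_const)
      ((hc.fderiv_apply (𝕜 := ℝ) _).fderiv_apply (𝕜 := ℝ) _) fun x hx =>
        (hg x (tsupport_fderiv_apply_subset ℝ _ (tsupport_fderiv_apply_subset ℝ _ hx))).continuousAt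
  · intro i _
    refine integrable_mul_of_hasCompactSupport hφ.continuous hc fun x hx => ?_
    have hg' : ContDiffAt ℝ 1 (fun x => fderiv ℝ g x (EuclideanSpace.single i 1)) x :=
      ((hg x hx).fderiv_right le_rfl).clm_apply contDiffAt_const
    exact (hg'.fderiv_right (m := 0) (by norm_num)).continuousAt.clm_apply continuousAt_const

theorem tsupport_lap_subset (φ : EuclideanSpace ℝ (Fin N) → ℝ) : tsupport (lap φ) ⊆ tsupport φ := by
  refine closure_minimal (fun x hx => ?_) (isClosed_tsupport φ)
  contrapose! hx
  rw [Function.notMem_support, lap_congr_of_eventuallyEq (notMem_tsupport_iff_eventuallyEq.1 hx)]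
  simp [lap]

theorem tsupport_biharm_subset (φ : EuclideanSpace ℝ (Fin N) → ℝ) :
    tsupport (biharm φ) ⊆ tsupport φ :=
  (tsupport_lap_subset (lap φ)).trans (tsupport_lap_subset φ)

theorem contDiff_lap {n : ℕ} (hφ : ContDiff ℝ (n + 2 : ℕ) φ) : ContDiff ℝ n (lap φ) :=
  contDiff_iff_contDiffAt.2 fun _ => contDiffAt_lap hφ.contDiffAt

theorem hasCompactSupport_lap (hc : HasCompactSupport φ) : HasCompactSupport (lap φ) :=
  hc.mono' (subset_closure.trans (tsupport_lap_subset φ))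

theorem integral_mul_biharm (hφ : ContDiff ℝ 4 φ) (hc : HasCompactSupport φ)
    (hg : ∀ x ∈ tsupport φ, ContDiffAt ℝ 4 g x) :
    ∫ x, φ x * biharm g x = ∫ x, biharm φ x * g x := by
  have hlap : ∫ x, φ x * biharm g x = ∫ x, lap φ x * lap g x :=
    integral_mul_lap (hφ.of_le (by norm_num)) hc fun x hx => contDiffAt_lap (n := 2) (hg x hx)
  rw [hlap]
  exact integral_mul_lap (contDiff_lap (n := 2) hφ) (hasCompactSupport_lap hc) fun x hx =>
    (hg x (tsupport_lap_subset φ hx)).of_le (by norm_num)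

end IntegrationByParts

namespace IsClassicalSolution

variable {N : ℕ} {lam : ℝ} {u φ : EuclideanSpace ℝ (Fin N) → ℝ}

theorem le_biharm (h : IsClassicalSolution N lam u) (hlam : 0 ≤ lam)
    {x : EuclideanSpace ℝ (Fin N)} (hx : x ∈ ball 0 1) : lam ≤ biharm u x := by
  have hpos := sub_pos.2 (h.lt_one x hx)
  rw [h.eqn x hx]
  exact le_div_self hlam (pow_pos hpos 2) (pow_le_one₀ hpos.le (sub_le_self _ (h.pos x hx).le))

theorem mul_integral_le (h : IsClassicalSolution N lam u) (hlam : 0 ≤ lam)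
    (hφ : ContDiff ℝ 4 φ) (hc : HasCompactSupport φ) (hsupp : tsupport φ ⊆ ball 0 1)
    (hnonneg : ∀ x, 0 ≤ φ x) : lam * ∫ x, φ x ≤ ∫ x, |biharm φ x| := by
  have hu : ∀ x ∈ tsupport φ, ContDiffAt ℝ 4 u x := fun x hx => h.contDiffAt (hsupp hx)
  have hcont : Continuous (biharm φ) :=
    (contDiff_lap (n := 0) (contDiff_lap (n := 2) hφ)).continuous
  have hc' : HasCompactSupport (biharm φ) := hasCompactSupport_lap (hasCompactSupport_lap hc)
  have hlower : ∀ x, φ x * lam ≤ φ x * biharm u x := fun x => by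
    by_cases hx : x ∈ tsupport φ
    · exact mul_le_mul_of_nonneg_left (h.le_biharm hlam (hsupp hx)) (hnonneg x)
    · simp [image_eq_zero_of_notMem_tsupport hx]
  have hupper : ∀ x, biharm φ x * u x ≤ |biharm φ x| := fun x => by
    by_cases hx : x ∈ tsupport (biharm φ)
    · have hxB := hsupp (tsupport_biharm_subset φ hx)
      refine (le_abs_self _).trans ?_
      rw [abs_mul, abs_of_pos (h.pos x hxB)]
      exact mul_le_of_le_one_right (abs_nonneg _) (h.lt_one x hxB).le
    · simp [image_eq_zero_of_notMem_tsupport hx]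
  calc lam * ∫ x, φ x = ∫ x, φ x * lam := by rw [integral_mul_const, mul_comm]
    _ ≤ ∫ x, φ x * biharm u x :=
        integral_mono ((hφ.continuous.integrable_of_hasCompactSupport hc).mul_const lam)
          (integrable_mul_of_hasCompactSupport hφ.continuous hc fun x hx =>
            (contDiffAt_lap (n := 0) (contDiffAt_lap (n := 2) (hu x hx))).continuousAt) hlower
    _ = ∫ x, biharm φ x * u x := integral_mul_biharm hφ hc hu
    _ ≤ ∫ x, |biharm φ x| :=
        integral_mono (integrable_mul_of_hasCompactSupport hcont hc' fun x hx =>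
          (hu x (tsupport_biharm_subset φ hx)).continuousAt)
          (hcont.integrable_of_hasCompactSupport hc').abs hupper

end IsClassicalSolution

theorem bddAbove_solSet (N : ℕ) : BddAbove (solSet N) := by
  let η : ContDiffBump (0 : EuclideanSpace ℝ (Fin N)) :=
    ⟨1 / 4, 1 / 2, by norm_num, by norm_num⟩
  have hsupp : tsupport η ⊆ ball 0 1 := by
    rw [η.tsupport_eq]
    exact closedBall_subset_ball (by norm_num)
  refine ⟨(∫ x, |biharm η x|) / ∫ x, η x, ?_⟩
  rintro lam ⟨hlam, u, hu⟩
  rw [le_div_iff₀ η.integral_pos]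
  exact hu.mul_integral_le hlam.le η.contDiff η.hasCompactSupport hsupp fun _ => η.nonneg

theorem sSup_solSet_succ_pos (m : ℕ) : 0 < sSup (solSet (m + 1)) := by
  obtain ⟨lam, hlam⟩ := solSet_succ_nonempty m
  exact hlam.1.trans_le (le_csSup (bddAbove_solSet _) hlam)

/-! ### From the radial profile to the extremal solution -/

namespace IsClassicalSolution

variable {m : ℕ} {lam lam' : ℝ} {u u' : EuclideanSpace ℝ (Fin (m + 1)) → ℝ}
  {e : EuclideanSpace ℝ (Fin (m + 1))}

theorem apply_smul_lt_one (h : IsClassicalSolution (m + 1) lam u) (he : ‖e‖ = 1) {r : ℝ}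
    (hr : r ∈ Icc 0 1) : u (r • e) < 1 := by
  rcases hr.2.lt_or_eq with hlt | rfl
  · exact h.lt_one _ (smul_mem_ball_of_norm_eq_one he ⟨by linarith [hr.1], hlt⟩)
  · rw [h.bdry _ (by rw [one_smul, he])]
    exact one_pos

theorem isRadialMEMS_rayProfile (hm : m ≠ 0) (h : IsClassicalSolution (m + 1) lam u)
    (hrad : IsRadialOnBall u) (he : ‖e‖ = 1) : IsRadialMEMS m lam (rayProfile u e) where
  toIsRadialSolution := h.isRadialSolution_rayProfile hm hrad he
  lt_one _ hr := h.apply_smul_lt_one he hr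
  val_one := h.bdry _ (by rw [one_smul, he])
  flux_one := h.flux_rayProfile_one he

/- By convexity of the nonlinearity, the increment between two voltages is a strict
supersolution of the equation linearised at the smaller solution. -/
theorem isStrictSupersolution_rayProfile_sub (hm : m ≠ 0) (h : IsClassicalSolution (m + 1) lam u)
    (h' : IsClassicalSolution (m + 1) lam' u') (hrad : IsRadialOnBall u)
    (hrad' : IsRadialOnBall u') (hlam : 0 ≤ lam) (hlt : lam < lam')
    (hle : ∀ x ∈ ball 0 1, u x ≤ u' x) (he : ‖e‖ = 1) :
    IsStrictSupersolution m 1 (fun r => memsPotential lam ((rayProfile u e).val r))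
      (rayProfile u' e - rayProfile u e)
      ((fun r => lam' / (1 - u' (r • e)) ^ 2) - fun r => lam / (1 - u (r • e)) ^ 2) where
  toIsRadialSolution := (h'.isRadialSolution_rayProfile hm hrad' he).sub
    (h.isRadialSolution_rayProfile hm hrad he)
  val_nonneg r hr := by
    refine sub_nonneg.2 ?_
    rcases hr.2.lt_or_eq with hr1 | rfl
    · exact hle _ (smul_mem_ball_of_norm_eq_one he ⟨by linarith [hr.1], hr1⟩)
    · have hnorm : ‖(1 : ℝ) • e‖ = 1 := by rw [one_smul, he]
      exact ((h.bdry _ hnorm).trans (h'.bdry _ hnorm).symm).le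
  flux_nonpos := by
    simp [h.flux_rayProfile_one he, h'.flux_rayProfile_one he]
  mul_val_lt r hr := by
    have hu := h.apply_smul_lt_one he (Ioo_subset_Icc_self hr)
    have hu' := h'.apply_smul_lt_one he (Ioo_subset_Icc_self hr)
    refine (memsPotential_mul_sub_le hlam hu hu').trans_lt (sub_lt_sub_right ?_ _)
    exact div_lt_div_of_pos_right hlt (pow_pos (sub_pos.2 hu') 2)

theorem apply_le_apply_zero (hm : m ≠ 0) (h : IsClassicalSolution (m + 1) lam u)
    (hrad : IsRadialOnBall u) (hlam : 0 < lam) {x : EuclideanSpace ℝ (Fin (m + 1))}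
    (hx : x ∈ ball 0 1) : u x ≤ u 0 := by
  have he : ‖(EuclideanSpace.single 0 1 : EuclideanSpace ℝ (Fin (m + 1)))‖ = 1 := by simp
  have hanti := (h.isRadialSolution_rayProfile hm hrad he).strictAntiOn_val
    (fun r hr => div_pos hlam <| pow_pos
      (sub_pos.2 (h.apply_smul_lt_one he (Ioo_subset_Icc_self hr))) 2)
    (h.flux_rayProfile_one he).le
  rw [hrad x hx (‖x‖ • EuclideanSpace.single 0 1) (by rw [norm_smul, he, mul_one, norm_norm])]
  have hle := hanti.antitoneOn (left_mem_Icc.2 zero_le_one)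
    ⟨norm_nonneg x, (mem_ball_zero_iff.1 hx).le⟩ (norm_nonneg x)
  simpa only [rayProfile, zero_smul] using hle

theorem le_one_sub_minimalGap (hm : 2 ≤ m) (hm' : m ≤ 7) (h : IsClassicalSolution (m + 1) lam u)
    (h' : IsClassicalSolution (m + 1) lam' u') (hrad : IsRadialOnBall u)
    (hrad' : IsRadialOnBall u') (hlam : 0 < lam) (hlt : lam < lam')
    (hle : ∀ x ∈ ball 0 1, u x ≤ u' x) {x : EuclideanSpace ℝ (Fin (m + 1))}
    (hx : x ∈ ball 0 1) : u x ≤ 1 - minimalGap := by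
  have hm0 : m ≠ 0 := by omega
  have he : ‖(EuclideanSpace.single 0 1 : EuclideanSpace ℝ (Fin (m + 1)))‖ = 1 := by simp
  have hgap := (h.isRadialMEMS_rayProfile hm0 hrad he).minimalGap_le hm hm' hlam
    (h.isStrictSupersolution_rayProfile_sub hm0 h' hrad hrad' hlam.le hlt hle he)
  simp only [rayProfile, zero_smul] at hgap
  linarith [h.apply_le_apply_zero hm0 hrad hlam hx]

end IsClassicalSolution

theorem extremal_regular_dim_five_to_eight_general (N : ℕ) (hN₁ : 3 ≤ N) (hN₂ : N ≤ 8)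
    (uMin : ℝ → EuclideanSpace ℝ (Fin N) → ℝ)
    (hMin : ∀ lam : ℝ, 0 < lam → lam < sSup (solSet N) →
      IsClassicalSolution N lam (uMin lam) ∧
        ∀ v, IsClassicalSolution N lam v →
          ∀ x ∈ ball (0 : EuclideanSpace ℝ (Fin N)) 1, uMin lam x ≤ v x)
    (hMono : ∀ x ∈ ball (0 : EuclideanSpace ℝ (Fin N)) 1, ∀ l₁ l₂ : ℝ,
      0 < l₁ → l₁ ≤ l₂ → l₂ < sSup (solSet N) → uMin l₁ x ≤ uMin l₂ x)
    (uStar : EuclideanSpace ℝ (Fin N) → ℝ)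
    (hStar : ∀ x ∈ ball (0 : EuclideanSpace ℝ (Fin N)) 1,
      Tendsto (fun lam => uMin lam x) (nhdsWithin (sSup (solSet N)) (Iio (sSup (solSet N))))
        (nhds (uStar x))) :
    sSup (uStar '' ball (0 : EuclideanSpace ℝ (Fin N)) 1) < 1 := by
  obtain ⟨m, rfl⟩ : ∃ m, N = m + 1 := ⟨N - 1, by omega⟩
  refine lt_of_le_of_lt ?_ (sub_lt_self 1 minimalGap_pos)
  refine csSup_le ((nonempty_ball.2 one_pos).image _) (forall_mem_image.2 fun x hx => ?_)
  refine le_of_tendsto (hStar x hx) ?_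
  filter_upwards [Ioo_mem_nhdsLT (sSup_solSet_succ_pos m)] with lam ⟨hlam, hlam_lt⟩
  obtain ⟨lam', hlt, hlam'_lt⟩ := exists_between hlam_lt
  obtain ⟨hu, hu_min⟩ := hMin lam hlam hlam_lt
  obtain ⟨hu', hu'_min⟩ := hMin lam' (hlam.trans hlt) hlam'_lt
  exact hu.le_one_sub_minimalGap (by omega) (by omega) hu' (hu.isRadialOnBall_of_minimal hu_min)
    (hu'.isRadialOnBall_of_minimal hu'_min) hlam hlt
    (fun y hy => hMono y hy lam lam' hlam hlt.le hlam'_lt) hx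

/-- for 5 ≤ N ≤ 8 the extremal solution u* is regular: sup_B u* < 1. -/
theorem extremal_regular_dim_five_to_eight (N : ℕ) (hN₁ : 5 ≤ N) (hN₂ : N ≤ 8)
    (uMin : ℝ → EuclideanSpace ℝ (Fin N) → ℝ)
    (hMin : ∀ lam : ℝ, 0 < lam → lam < sSup (solSet N) →
      IsClassicalSolution N lam (uMin lam) ∧
        ∀ v, IsClassicalSolution N lam v →
          ∀ x ∈ ball (0 : EuclideanSpace ℝ (Fin N)) 1, uMin lam x ≤ v x)
    (hMono : ∀ x ∈ ball (0 : EuclideanSpace ℝ (Fin N)) 1, ∀ l₁ l₂ : ℝ,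
      0 < l₁ → l₁ ≤ l₂ → l₂ < sSup (solSet N) → uMin l₁ x ≤ uMin l₂ x)
    (uStar : EuclideanSpace ℝ (Fin N) → ℝ)
    (hStar : ∀ x ∈ ball (0 : EuclideanSpace ℝ (Fin N)) 1,
      Tendsto (fun lam => uMin lam x) (nhdsWithin (sSup (solSet N)) (Iio (sSup (solSet N))))
        (nhds (uStar x)))
    :
    sSup (uStar '' ball (0 : EuclideanSpace ℝ (Fin N)) 1) < 1 :=
  extremal_regular_dim_five_to_eight_general N (by omega) hN₂ uMin hMin hMono uStar hStar
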